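/- Let n be a positive integer, let p > 1 and let ω satisfy a_p ≤ ω < ω_p, where ω_p = p/(p+1)² and a_p = p(7p-5)/(4(p+1)(2p-1)²). Then the boundary value problem u''(r) + ((n-1)/r)·u'(r) − ω·u(r) + u(r)^p − u(r)^{2p-1} = 0 for r > 0, u'(0) = 0, lim_{r→∞} u(r) = 0, has at most one positive solution: if u₁ and u₂ are both functions from [0,∞) to ℝ, continuous on [0,∞), twice differentiable on (0,∞), with (one-sided) derivative 0 at r = 0, everywhere positive, tending to 0 at infinity, and satisfying the equation for all r > 0, then u₁ = u₂. -/

import Mathlib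

open Real Set Filter Topology

/-- `u : ℝ → ℝ` (viewed as a function on `[0,∞)`) is a positive solution of problem (b):
continuous on `[0,∞)`, twice differentiable on `(0,∞)`, satisfies the ODE
`u'' + ((n-1)/r) u' - ω u + u^p - u^(2p-1) = 0` for `r > 0`, has one-sided derivative `0`
at `r = 0`, is strictly positive on `[0,∞)`, and tends to `0` at infinity. -/
def IsPositiveSolution (n : ℕ) (p ω : ℝ) (u : ℝ → ℝ) : Prop :=
  ContinuousOn u (Set.Ici 0) ∧
  (∀ r > (0 : ℝ), DifferentiableAt ℝ u r ∧ DifferentiableAt ℝ (deriv u) r) ∧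
  (∀ r > (0 : ℝ), deriv (deriv u) r + ((n : ℝ) - 1) / r * deriv u r
      - ω * u r + u r ^ p - u r ^ (2 * p - 1) = 0) ∧
  HasDerivWithinAt u 0 (Set.Ici 0) 0 ∧
  (∀ r ≥ (0 : ℝ), 0 < u r) ∧
  Filter.Tendsto u Filter.atTop (nhds 0)


/-! ### The abstract assumptions -/

/-- The properties of the nonlinearity which are used in the uniqueness argument. -/
structure Nl (f F : ℝ → ℝ) (β : ℝ) : Prop where
  hF : ∀ z > 0, HasDerivAt F (f z) z
  hfc : ContinuousOn f (Ioi 0)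
  hlip : ∀ a b, 0 < a → ∃ L, 0 ≤ L ∧ ∀ x ∈ Icc a b, ∀ y ∈ Icc a b, |f x - f y| ≤ L * |x - y|
  hneg : ∀ z, 0 < z → z ≤ β → F z ≤ 0
  hF0 : Tendsto F (𝓝[>] 0) (𝓝 0)
  hconc : ∀ x y, β ≤ x → x < y → f y * (x - β) < f x * (y - β)
  hiv : ∀ x y, 0 < x → x < y → 0 ≤ f y → 0 ≤ F y → F x < F y
  hsm : ∃ δ c, 0 < δ ∧ 0 < c ∧ StrictAntiOn f (Ioo 0 δ) ∧
    ∀ z ∈ Ioo 0 δ, f z < 0 ∧ F z ≤ -(c * z) ^ 2 / 2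

/-- Positive decaying radial solutions, in dimension `k + 1`. -/
structure Sol (k : ℕ) (f u : ℝ → ℝ) : Prop where
  cont : ContinuousOn u (Ici 0)
  hd : ∀ r > 0, HasDerivAt u (deriv u r) r
  hdd : ∀ r > 0, HasDerivAt (deriv u) (-(k / r) * deriv u r - f (u r)) r
  h0 : HasDerivWithinAt u 0 (Ici 0) 0
  pos : ∀ r ≥ 0, 0 < u r
  lim : Tendsto u atTop (𝓝 0)

/-! ### Monotonicity helpers -/

lemma anti_of {s : Set ℝ} {g g' : ℝ → ℝ} (hs : Convex ℝ s)
    (h : ∀ x ∈ s, HasDerivAt g (g' x) x) (hi : ∀ x ∈ interior s, g' x ≤ 0) : AntitoneOn g s := by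
  refine antitoneOn_of_deriv_nonpos hs (fun x hx => (h x hx).continuousAt.continuousWithinAt)
    (fun x hx => (h x (interior_subset hx)).differentiableAt.differentiableWithinAt) ?_
  intro x hx
  rw [(h x (interior_subset hx)).deriv]; exact hi x hx

lemma mono_of {s : Set ℝ} {g g' : ℝ → ℝ} (hs : Convex ℝ s)
    (h : ∀ x ∈ s, HasDerivAt g (g' x) x) (hi : ∀ x ∈ interior s, 0 ≤ g' x) : MonotoneOn g s := by
  refine monotoneOn_of_deriv_nonneg hs (fun x hx => (h x hx).continuousAt.continuousWithinAt)
    (fun x hx => (h x (interior_subset hx)).differentiableAt.differentiableWithinAt) ?_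
  intro x hx
  rw [(h x (interior_subset hx)).deriv]; exact hi x hx

lemma santi_of {s : Set ℝ} {g g' : ℝ → ℝ} (hs : Convex ℝ s)
    (h : ∀ x ∈ s, HasDerivAt g (g' x) x) (hi : ∀ x ∈ interior s, g' x < 0) :
    StrictAntiOn g s := by
  refine strictAntiOn_of_deriv_neg hs (fun x hx => (h x hx).continuousAt.continuousWithinAt) ?_
  intro x hx
  rw [(h x (interior_subset hx)).deriv]; exact hi x hx

lemma smono_of {s : Set ℝ} {g g' : ℝ → ℝ} (hs : Convex ℝ s)
    (h : ∀ x ∈ s, HasDerivAt g (g' x) x) (hi : ∀ x ∈ interior s, 0 < g' x) :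
    StrictMonoOn g s := by
  refine strictMonoOn_of_deriv_pos hs (fun x hx => (h x hx).continuousAt.continuousWithinAt) ?_
  intro x hx
  rw [(h x (interior_subset hx)).deriv]; exact hi x hx

/-- An antitone function on `(a,b)` with limit `l` at `a` is at most `l`. -/
lemma anti_le_lim {g : ℝ → ℝ} {a b l : ℝ} (hg : AntitoneOn g (Ioo a b))
    (hl : Tendsto g (𝓝[>] a) (𝓝 l)) : ∀ x ∈ Ioo a b, g x ≤ l := by
  intro x hx
  refine ge_of_tendsto hl ?_
  filter_upwards [Ioo_mem_nhdsGT hx.1] with y hy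
  exact hg ⟨hy.1, hy.2.trans hx.2⟩ hx hy.2.le

/-! ### Gronwall type uniqueness -/

lemma gronwall_fwd {k : ℕ} {f u v u' v' : ℝ → ℝ} {a b L : ℝ} (ha : 0 ≤ a) (hL : 0 ≤ L)
    (hu : ∀ r ∈ Ioo a b, HasDerivAt u (u' r) r) (hv : ∀ r ∈ Ioo a b, HasDerivAt v (v' r) r)
    (hu' : ∀ r ∈ Ioo a b, HasDerivAt u' (-(k / r) * u' r - f (u r)) r)
    (hv' : ∀ r ∈ Ioo a b, HasDerivAt v' (-(k / r) * v' r - f (v r)) r)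
    (hf : ∀ r ∈ Ioo a b, |f (u r) - f (v r)| ≤ L * |u r - v r|)
    (hl : Tendsto (fun r => (u r - v r) ^ 2 + (u' r - v' r) ^ 2) (𝓝[>] a) (𝓝 0)) :
    ∀ r ∈ Ioo a b, u r = v r := by
  have key : AntitoneOn (fun r => ((u r - v r) ^ 2 + (u' r - v' r) ^ 2) * exp (-(1 + L) * r))
      (Ioo a b) := by
    refine anti_of (convex_Ioo a b) (fun r hr => (((((hu r hr).sub (hv r hr)).pow 2).add
      (((hu' r hr).sub (hv' r hr)).pow 2)).mul ((hasDerivAt_id r).const_mul (-(1 + L))).exp)) ?_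
    intro r hr
    rw [interior_Ioo] at hr
    have hr0 : 0 < r := ha.trans_lt hr.1
    have h1 := hf r hr
    set w := u r - v r
    set y := u' r - v' r with hy
    have h2 : 0 ≤ (k : ℝ) / r * y ^ 2 := by positivity
    have h3 : -(y * (f (u r) - f (v r))) ≤ L * |w| * |y| := by
      have : -(y * (f (u r) - f (v r))) ≤ |y * (f (u r) - f (v r))| := neg_le_abs _
      rw [abs_mul] at this
      nlinarith [abs_nonneg y]
    have h4 : 2 * (|w| * |y|) ≤ w ^ 2 + y ^ 2 := by
      nlinarith [sq_nonneg (|w| - |y|), sq_abs w, sq_abs y]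
    have h5 : w * y ≤ |w| * |y| := by rw [← abs_mul]; exact le_abs_self _
    have h6 : 2 * w * y + 2 * y * (-(k / r) * u' r - f (u r) - (-(k / r) * v' r - f (v r)))
        ≤ (1 + L) * (w ^ 2 + y ^ 2) := by
      have : 2 * y * (-(k / r) * u' r - f (u r) - (-(k / r) * v' r - f (v r)))
        = -2 * (k / r * y ^ 2) + 2 * -(y * (f (u r) - f (v r))) := by rw [hy]; ring
      nlinarith
    have h7 := exp_pos (-(1 + L) * r)
    simp only [Pi.sub_apply, Pi.add_apply, Pi.pow_apply, id]
    norm_num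
    rw [show u r - v r = w from rfl, show u' r - v' r = y from rfl]
    norm_num at h6 h7 ⊢
    nlinarith
  have hlim : Tendsto (fun r => ((u r - v r) ^ 2 + (u' r - v' r) ^ 2) * exp (-(1 + L) * r))
      (𝓝[>] a) (𝓝 0) := by
    have : Tendsto (fun r => exp (-(1 + L) * r)) (𝓝[>] a) (𝓝 (exp (-(1 + L) * a))) :=
      (Continuous.tendsto (by fun_prop) a).mono_left nhdsWithin_le_nhds
    simpa using hl.mul this
  intro r hr
  have h1 := anti_le_lim key hlim r hr
  have h2 := exp_pos (-(1 + L) * r)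
  have h3 : (u r - v r) ^ 2 + (u' r - v' r) ^ 2 ≤ 0 := by
    by_contra h; push Not at h; nlinarith [mul_pos h h2]
  have : (u r - v r) ^ 2 = 0 := by nlinarith [sq_nonneg (u r - v r), sq_nonneg (u' r - v' r)]
  nlinarith [pow_eq_zero_iff (two_ne_zero) |>.1 this]

lemma gronwall_bwd {k : ℕ} {f u v u' v' : ℝ → ℝ} {a b L : ℝ} (ha : 0 < a) (hL : 0 ≤ L)
    (hu : ∀ r ∈ Icc a b, HasDerivAt u (u' r) r) (hv : ∀ r ∈ Icc a b, HasDerivAt v (v' r) r)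
    (hu' : ∀ r ∈ Icc a b, HasDerivAt u' (-(k / r) * u' r - f (u r)) r)
    (hv' : ∀ r ∈ Icc a b, HasDerivAt v' (-(k / r) * v' r - f (v r)) r)
    (hf : ∀ r ∈ Icc a b, |f (u r) - f (v r)| ≤ L * |u r - v r|)
    (h0 : u b = v b) (h0' : u' b = v' b) :
    ∀ r ∈ Icc a b, u r = v r := by
  have key : MonotoneOn (fun r => ((u r - v r) ^ 2 + (u' r - v' r) ^ 2) *
      exp ((1 + L + 2 * (k / a)) * r)) (Icc a b) := by
    refine mono_of (convex_Icc a b) (fun r hr => (((((hu r hr).sub (hv r hr)).pow 2).add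
      (((hu' r hr).sub (hv' r hr)).pow 2)).mul
        ((hasDerivAt_id r).const_mul (1 + L + 2 * (k / a))).exp)) ?_
    intro r hr
    have hr := interior_subset hr
    have hr0 : 0 < r := ha.trans_le hr.1
    have h1 := hf r hr
    set w := u r - v r
    set y := u' r - v' r with hy
    have hka : (k : ℝ) / r ≤ k / a := div_le_div_of_nonneg_left (by positivity) ha hr.1
    have hka0 : 0 ≤ (k : ℝ) / a := by positivity
    have h2 : (k : ℝ) / r * y ^ 2 ≤ k / a * y ^ 2 := by gcongr
    have h3 : (y * (f (u r) - f (v r))) ≤ L * |w| * |y| := by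
      have : (y * (f (u r) - f (v r))) ≤ |y * (f (u r) - f (v r))| := le_abs_self _
      rw [abs_mul] at this
      nlinarith [abs_nonneg y]
    have h4 : 2 * (|w| * |y|) ≤ w ^ 2 + y ^ 2 := by
      nlinarith [sq_nonneg (|w| - |y|), sq_abs w, sq_abs y]
    have h5 : -(w * y) ≤ |w| * |y| := by rw [← abs_mul]; exact neg_le_abs _
    have h6 : -((1 + L + 2 * (k / a)) * (w ^ 2 + y ^ 2)) ≤
       2 * w * y + 2 * y * (-(k / r) * u' r - f (u r) - (-(k / r) * v' r - f (v r))) := by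
      have : 2 * y * (-(k / r) * u' r - f (u r) - (-(k / r) * v' r - f (v r)))
        = -2 * (k / r * y ^ 2) + 2 * -(y * (f (u r) - f (v r))) := by rw [hy]; ring
      rw [this]
      nlinarith [mul_nonneg hka0 (sq_nonneg w), mul_nonneg hL (sq_nonneg w)]
    have h7 := exp_pos ((1 + L + 2 * (k / a)) * r)
    simp only [Pi.sub_apply, Pi.add_apply, Pi.pow_apply, id]
    norm_num
    rw [show u r - v r = w from rfl, show u' r - v' r = y from rfl]
    norm_num at h6 h7 ⊢
    nlinarith
  intro r hr
  have h1 := key hr ⟨hr.1.trans hr.2, le_rfl⟩ hr.2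
  simp only [h0, h0', sub_self] at h1
  norm_num at h1
  have h2 := exp_pos ((1 + L + 2 * (k / a)) * r)
  have h3 : (u r - v r) ^ 2 + (u' r - v' r) ^ 2 ≤ 0 := by
    by_contra h; push Not at h; nlinarith [mul_pos h h2]
  have : (u r - v r) ^ 2 = 0 := by nlinarith [sq_nonneg (u r - v r), sq_nonneg (u' r - v' r)]
  nlinarith [pow_eq_zero_iff (two_ne_zero) |>.1 this]


/-! ### Sign of difference quotients -/

lemma ev_left_gt {g : ℝ → ℝ} {g' a : ℝ} (h : HasDerivAt g g' a) (hg : g' < 0) :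
    ∀ᶠ x in 𝓝[<] a, g a < g x := by
  have h1 := (hasDerivAt_iff_tendsto_slope.1 h).eventually (gt_mem_nhds hg)
  have h2 := h1.filter_mono (nhdsWithin_mono a (fun x (hx : x < a) => hx.ne))
  filter_upwards [h2, self_mem_nhdsWithin] with x hx hxa
  rw [slope_def_field, div_lt_iff_of_neg (by simpa using hxa)] at hx
  linarith

lemma ev_left_lt {g : ℝ → ℝ} {g' a : ℝ} (h : HasDerivAt g g' a) (hg : 0 < g') :
    ∀ᶠ x in 𝓝[<] a, g x < g a := by
  filter_upwards [ev_left_gt h.neg (neg_neg_of_pos hg)] with x hx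
  simpa using hx

lemma ev_right_gt {g : ℝ → ℝ} {g' a : ℝ} (h : HasDerivAt g g' a) (hg : 0 < g') :
    ∀ᶠ x in 𝓝[>] a, g a < g x := by
  have h1 := (hasDerivAt_iff_tendsto_slope.1 h).eventually (lt_mem_nhds hg)
  have h2 := h1.filter_mono (nhdsWithin_mono a (fun x (hx : a < x) => hx.ne'))
  filter_upwards [h2, self_mem_nhdsWithin] with x hx hxa
  rw [slope_def_field, lt_div_iff₀ (by simpa using hxa)] at hx
  linarith

namespace Sol
variable {k : ℕ} {f F u : ℝ → ℝ} {β : ℝ}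

lemma hdw (S : Sol k f u) {r : ℝ} (hr : 0 < r) :
    HasDerivAt (fun r => r ^ k * deriv u r) (-(r ^ k * f (u r))) r := by
  have := (hasDerivAt_pow k r).mul (S.hdd r hr)
  refine this.congr_deriv ?_
  rcases k with _ | k
  · simp
  · have hr0 := hr.ne'
    field_simp
    simp
    ring

/-- Behaviour of the derivative at the origin. -/
lemma near0 (S : Sol k f u) (N : Nl f F β) : ∃ M, ∀ y ∈ Ioo (0 : ℝ) 1, |deriv u y| ≤ M * y := by
  obtain ⟨M, hM⟩ : ∃ M, ∀ x ∈ Icc (0 : ℝ) 1, ‖f (u x)‖ ≤ M := by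
    apply isCompact_Icc.exists_bound_of_continuousOn
    exact N.hfc.comp (S.cont.mono Icc_subset_Ici_self) (fun x hx => S.pos x hx.1)
  have hM0 : 0 ≤ M := (norm_nonneg _).trans (hM 0 (by simp))
  refine ⟨M, fun y hy => ?_⟩
  have hlip : ∀ x ∈ Ioo 0 y, |y ^ k * deriv u y - x ^ k * deriv u x| ≤ M * y ^ k * y := by
    intro x hx
    have := Convex.norm_image_sub_le_of_norm_hasDerivWithin_le (s := Icc x y)
      (f := fun r => r ^ k * deriv u r) (f' := fun r => -(r ^ k * f (u r))) (C := M * y ^ k)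
      (x := x) (y := y)
      (fun t ht => (S.hdw (hx.1.trans_le ht.1)).hasDerivWithinAt) ?_ (convex_Icc _ _)
      ⟨le_rfl, hx.2.le⟩ ⟨hx.2.le, le_rfl⟩
    · rw [Real.norm_eq_abs, Real.norm_eq_abs] at this
      refine this.trans ?_
      have : |y - x| ≤ y := by rw [abs_of_nonneg (by linarith [hx.2])]; linarith [hx.1]
      have hy' := hy.1
      gcongr
    · intro t ht
      have ht0 := hx.1.trans_le ht.1
      rw [norm_neg, norm_mul, norm_pow, Real.norm_eq_abs, abs_of_pos ht0, mul_comm]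
      have := hM t ⟨ht0.le, ht.2.trans hy.2.le⟩
      have := ht.2
      gcongr
  have hsmall : ∀ ε > 0, ∃ x ∈ Ioo 0 y, |deriv u x| ≤ ε := by
    intro ε hε
    have h1 := (hasDerivWithinAt_iff_isLittleO.1 S.h0).def hε
    have h1 := h1.filter_mono (nhdsWithin_mono (0:ℝ) Ioi_subset_Ici_self)
    obtain ⟨t, ht, ht'⟩ := (h1.and (Ioo_mem_nhdsGT hy.1)).exists
    obtain ⟨c, hc, hc'⟩ := exists_hasDerivAt_eq_slope u (deriv u) ht'.1
      (S.cont.mono Icc_subset_Ici_self) (fun x hx => S.hd x hx.1)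
    refine ⟨c, ⟨hc.1, hc.2.trans ht'.2⟩, ?_⟩
    simp at ht
    rw [hc', sub_zero, abs_div, abs_of_pos ht'.1, div_le_iff₀ ht'.1]
    rwa [abs_of_pos ht'.1] at ht
  have hA : |y ^ k * deriv u y| ≤ M * y ^ k * y := by
    refine le_of_forall_pos_le_add (fun ε hε => ?_)
    obtain ⟨x, hx, hxe⟩ := hsmall ε hε
    have h1 := hlip x hx
    have h2 : |x ^ k * deriv u x| ≤ ε := by
      rw [abs_mul, abs_of_pos (pow_pos hx.1 k)]
      have : x ^ k ≤ 1 := pow_le_one₀ hx.1.le (hx.2.trans hy.2).le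
      calc _ ≤ 1 * ε := by gcongr
        _ = ε := one_mul _
    have h3 := abs_sub_abs_le_abs_sub (y ^ k * deriv u y) (x ^ k * deriv u x)
    linarith
  have hyk := pow_pos hy.1 k
  rw [abs_mul, abs_of_pos hyk] at hA
  have : y ^ k * |deriv u y| ≤ y ^ k * (M * y) := by linarith
  exact le_of_mul_le_mul_left this hyk

lemma deriv_tendsto0 (S : Sol k f u) (N : Nl f F β) : Tendsto (deriv u) (𝓝[>] 0) (𝓝 0) := by
  obtain ⟨M, hM⟩ := S.near0 N
  have h1 : Tendsto (fun y : ℝ => M * y) (𝓝[>] 0) (𝓝 0) := by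
    have : Tendsto (fun y : ℝ => M * y) (𝓝 0) (𝓝 (M * 0)) :=
      Continuous.tendsto (by fun_prop) 0
    rw [mul_zero] at this
    exact this.mono_left nhdsWithin_le_nhds
  refine squeeze_zero_norm' ?_ h1
  filter_upwards [Ioo_mem_nhdsGT one_pos] with y hy using hM y hy

lemma tendsto0 (S : Sol k f u) : Tendsto u (𝓝[>] 0) (𝓝 (u 0)) :=
  (S.cont 0 (by simp)).mono_left (nhdsWithin_mono _ Ioi_subset_Ici_self)

/-- The energy. -/
lemma hdE (S : Sol k f u) (N : Nl f F β) {r : ℝ} (hr : 0 < r) :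
    HasDerivAt (fun r => deriv u r ^ 2 / 2 + F (u r)) (-(k / r) * deriv u r ^ 2) r := by
  have h := (((S.hdd r hr).pow 2).div_const 2).add
    ((N.hF (u r) (S.pos r hr.le)).comp r (S.hd r hr))
  refine h.congr_deriv ?_
  simp
  ring

lemma E_anti (S : Sol k f u) (N : Nl f F β) :
    AntitoneOn (fun r => deriv u r ^ 2 / 2 + F (u r)) (Ioi 0) := by
  refine anti_of (convex_Ioi 0) (fun r hr => S.hdE N hr) ?_
  intro r hr
  rw [interior_Ioi] at hr
  have : 0 < r := hr
  have : 0 ≤ (k : ℝ) / r := by positivity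
  nlinarith [sq_nonneg (deriv u r)]

lemma limF (S : Sol k f u) (N : Nl f F β) : Tendsto (fun r => F (u r)) atTop (𝓝 0) := by
  refine N.hF0.comp ?_
  rw [tendsto_nhdsWithin_iff]
  refine ⟨S.lim, ?_⟩
  filter_upwards [eventually_ge_atTop 0] with r hr using S.pos r hr

lemma E_small (S : Sol k f u) (N : Nl f F β) {ε : ℝ} (hε : 0 < ε) (r0 : ℝ) :
    ∃ r, r0 < r ∧ 0 < r ∧ |deriv u r ^ 2 / 2 + F (u r)| ≤ ε := by
  have hη : 0 < min 1 ε := lt_min one_pos hε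
  have e1 : ∀ᶠ r in atTop, |u r| < min 1 ε / 2 :=
    (by simpa using S.lim.abs : Tendsto (fun r => |u r|) atTop (𝓝 0)).eventually
      (gt_mem_nhds (by positivity))
  have e2 : ∀ᶠ r in atTop, |F (u r)| < ε / 2 :=
    (by simpa using (S.limF N).abs : Tendsto (fun r => |F (u r)|) atTop (𝓝 0)).eventually
      (gt_mem_nhds (by positivity))
  obtain ⟨R, hR⟩ := eventually_atTop.1 (e1.and e2)
  set a := max R (max r0 0) + 1
  have ha : R < a ∧ r0 < a ∧ 0 < a := by
    refine ⟨?_, ?_, ?_⟩ <;> simp only [a]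
    · linarith [le_max_left R (max r0 0)]
    · linarith [le_max_right R (max r0 0), le_max_left r0 0]
    · linarith [le_max_right R (max r0 0), le_max_right r0 0]
  obtain ⟨c, hc, hc'⟩ := exists_hasDerivAt_eq_slope u (deriv u) (show a < a + 1 by linarith)
    (S.cont.mono (fun x hx => by have := hx.1; simp; linarith))
    (fun x hx => S.hd x (by have := hx.1; linarith))
  refine ⟨c, by linarith [hc.1], by linarith [hc.1], ?_⟩
  have h1 := (hR a ha.1.le).1
  have h2 := (hR (a + 1) (by linarith)).1
  have h3 := (hR c (by linarith [hc.1])).2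
  have h4 : |deriv u c| ≤ min 1 ε := by
    rw [hc', add_sub_cancel_left, div_one]
    have := abs_sub (u (a + 1)) (u a)
    linarith
  have h5 : deriv u c ^ 2 ≤ ε := by
    rw [← sq_abs]
    have := abs_nonneg (deriv u c)
    nlinarith [min_le_left 1 ε, min_le_right 1 ε]
  have h6 := sq_nonneg (deriv u c)
  rw [abs_le] at *
  constructor <;> linarith [(abs_lt.1 h3).1, (abs_lt.1 h3).2]

lemma E_nonneg (S : Sol k f u) (N : Nl f F β) {r : ℝ} (hr : 0 < r) :
    0 ≤ deriv u r ^ 2 / 2 + F (u r) := by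
  by_contra h
  push Not at h
  obtain ⟨t, ht, ht0, hte⟩ := S.E_small N (ε := -(deriv u r ^ 2 / 2 + F (u r)) / 2)
    (by linarith) r
  have := S.E_anti N (show r ∈ Ioi 0 from hr) (show t ∈ Ioi 0 from ht0) ht.le
  simp only at this
  have := (abs_le.1 hte).1
  linarith

lemma deriv_neg_large (S : Sol k f u) (N : Nl f F β) : ∃ R > 0, ∀ r ≥ R, deriv u r < 0 := by
  obtain ⟨δ, c, hδ, hc, hanti, hsm⟩ := N.hsm
  obtain ⟨R, hR⟩ := eventually_atTop.1 (S.lim.eventually (gt_mem_nhds hδ))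
  refine ⟨max R 1, by positivity, fun r hr => ?_⟩
  by_contra hneg
  push Not at hneg
  have hr1 : 1 ≤ r := (le_max_right R 1).trans hr
  have hA : StrictMonoOn (fun r => r ^ k * deriv u r) (Ici r) := by
    refine smono_of (convex_Ici r)
      (fun x hx => S.hdw (by have : r ≤ x := hx; linarith)) ?_
    intro x hx
    rw [interior_Ici] at hx
    have hx : r < x := hx
    have hx0 : 0 < x := by linarith
    have := (hsm (u x) ⟨S.pos x hx0.le, hR x ((le_max_left R 1).trans (hr.trans hx.le))⟩).1
    have := pow_pos hx0 k
    nlinarith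
  have hpos : ∀ x > r, 0 < deriv u x := by
    intro x hx
    have h1 := hA self_mem_Ici (show x ∈ Ici r from hx.le) hx
    simp only at h1
    have h2 : 0 ≤ r ^ k * deriv u r := mul_nonneg (by positivity) hneg
    exact pos_of_mul_pos_right (h2.trans_lt h1) (pow_nonneg (by linarith) k)
  have hmono : StrictMonoOn u (Ici r) := by
    refine smono_of (convex_Ici r) (fun x hx => S.hd x (by have : r ≤ x := hx; linarith)) ?_
    intro x hx
    rw [interior_Ici] at hx
    exact hpos x hx
  have h1 : u r ≤ 0 := by
    refine ge_of_tendsto S.lim ?_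
    filter_upwards [eventually_ge_atTop r] with x hx
    exact hmono.monotoneOn self_mem_Ici hx hx
  linarith [S.pos r (by linarith)]

/-- Positive solutions are decreasing. -/
lemma deriv_neg (S : Sol k f u) (N : Nl f F β) : ∀ r > 0, deriv u r < 0 := by
  by_contra hcon
  push Not at hcon
  obtain ⟨ra, hra, hra'⟩ := hcon
  obtain ⟨R, hR0, hR⟩ := S.deriv_neg_large N
  set Z := {r | ra ≤ r ∧ 0 ≤ deriv u r}
  have hZb : BddAbove Z := ⟨R, fun r hr => by
    by_contra h; push Not at h; linarith [hR r h.le, hr.2]⟩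
  have hZn : Z.Nonempty := ⟨ra, le_rfl, hra'⟩
  set r1 := sSup Z
  have hr1 : ra ≤ r1 := le_csSup hZb ⟨le_rfl, hra'⟩
  have hr10 : 0 < r1 := by linarith
  have hafter : ∀ r > r1, deriv u r < 0 := by
    intro r hr
    by_contra h
    push Not at h
    exact absurd (le_csSup hZb (⟨hr1.trans hr.le, h⟩ : r ∈ Z)) (not_le.2 hr)
  have hc1 : ContinuousAt (deriv u) r1 := (S.hdd r1 hr10).continuousAt
  have hle : deriv u r1 ≤ 0 := by
    refine le_of_tendsto (hc1.tendsto.mono_left (nhdsWithin_le_nhds (s := Ioi r1))) ?_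
    filter_upwards [self_mem_nhdsWithin] with x hx using (hafter x hx).le
  have hge : 0 ≤ deriv u r1 := by
    by_contra h
    push Not at h
    have h1 := hc1.eventually (gt_mem_nhds h)
    have h2 := (mem_closure_iff_frequently.1 (csSup_mem_closure hZn hZb))
    obtain ⟨x, hx, hx'⟩ := (h2.and_eventually h1).exists
    linarith [hx.2]
  have hz : deriv u r1 = 0 := le_antisymm hle hge
  have hd1 := S.hdd r1 hr10
  rw [hz, mul_zero, zero_sub] at hd1
  have hf : 0 ≤ f (u r1) := by
    by_contra h
    push Not at h
    obtain ⟨x, hx, hx'⟩ := ((ev_right_gt hd1 (by linarith)).and self_mem_nhdsWithin).exists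
    linarith [hafter x hx']
  have hFr1 : 0 ≤ F (u r1) := by
    have := S.E_nonneg N hr10
    rw [hz] at this; linarith
  have hsa : StrictAntiOn u (Ici r1) := by
    refine santi_of (convex_Ici r1) (fun x hx => S.hd x (by have : r1 ≤ x := hx; linarith)) ?_
    intro x hx
    rw [interior_Ici] at hx
    exact hafter x hx
  rcases hf.eq_or_lt with hf0 | hfpos
  · -- constant solution
    obtain ⟨L, hL0, hL⟩ := N.hlip (u (r1 + 1)) (u r1) (S.pos _ (by linarith))
    have hfc : f (u r1) = 0 := hf0.symm
    have := gronwall_fwd (k := k) (f := f) (u := u) (u' := deriv u) (v := fun _ => u r1)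
      (v' := fun _ => 0) (a := r1) (b := r1 + 1) hr10.le hL0
      (fun r hr => S.hd r (by linarith [hr.1])) (fun r hr => hasDerivAt_const _ _)
      (fun r hr => S.hdd r (by linarith [hr.1]))
      (fun r hr => by simpa [hfc] using hasDerivAt_const r (0 : ℝ))
      (fun r hr => hL _ ⟨hsa.antitoneOn (by simpa using hr.1.le) (by simp) hr.2.le,
        hsa.antitoneOn (by simp) (by simpa using hr.1.le) hr.1.le⟩ _
        ⟨hsa.antitoneOn (by simp) (by simp) (by linarith), le_rfl⟩)
      (by
        have h1 : ContinuousAt (fun r => (u r - u r1) ^ 2 + (deriv u r - 0) ^ 2) r1 := by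
          have := (S.hd r1 hr10).continuousAt
          fun_prop
        have h2 := h1.tendsto.mono_left (nhdsWithin_le_nhds (s := Ioi r1))
        simpa [hz] using h2)
      (r1 + 1 / 2) ⟨by linarith, by linarith⟩
    have h2 := hsa self_mem_Ici (show r1 + 1 / 2 ∈ Ici r1 by simp)
      (by linarith)
    linarith
  · have e1 := ev_left_gt hd1 (by linarith)
    obtain ⟨l, hl, hl'⟩ := (mem_nhdsLT_iff_exists_Ioo_subset).1 e1
    have hl : l < r1 := hl
    set b := max l (r1 / 2)
    have hb : b < r1 := max_lt hl (by linarith)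
    have hb0 : 0 < b := lt_of_lt_of_le (by linarith) (le_max_right l (r1 / 2))
    have hsm : StrictMonoOn u (Icc b r1) := by
      refine smono_of (convex_Icc _ _) (fun x hx => S.hd x (hb0.trans_le hx.1)) ?_
      intro x hx
      rw [interior_Icc] at hx
      have := hl' ⟨(le_max_left l (r1/2)).trans_lt hx.1, hx.2⟩
      simpa [hz] using this
    obtain ⟨t0, ht0, hmin⟩ := isCompact_Icc.exists_isMinOn (nonempty_Icc.2 hr10.le)
      (f := u) (S.cont.mono (fun x hx => hx.1))
    have hlt : u t0 < u r1 := by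
      have h1 := hsm ⟨le_rfl, hb.le⟩ ⟨hb.le, le_rfl⟩ hb
      have h2 : u t0 ≤ u b := hmin ⟨hb0.le, hb.le⟩
      linarith
    have hFlt := N.hiv (u t0) (u r1) (S.pos _ ht0.1) hlt hf hFr1
    have ht1 : t0 < r1 := lt_of_le_of_ne ht0.2 (fun h => by rw [h] at hlt; exact lt_irrefl _ hlt)
    rcases ht0.1.eq_or_lt with h00 | h00
    · -- minimum at the origin
      have h1 : Tendsto (fun r => deriv u r ^ 2 / 2 + F (u r)) (𝓝[>] 0)
          (𝓝 (0 ^ 2 / 2 + F (u 0))) := by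
        refine (((S.deriv_tendsto0 N).pow 2).div_const 2).add ?_
        exact ((N.hF (u 0) (S.pos 0 le_rfl)).continuousAt.tendsto).comp S.tendsto0
      have h2 : deriv u r1 ^ 2 / 2 + F (u r1) ≤ 0 ^ 2 / 2 + F (u 0) := by
        refine ge_of_tendsto h1 ?_
        filter_upwards [Ioo_mem_nhdsGT hr10] with x hx
        exact S.E_anti N (show x ∈ Ioi 0 from hx.1) (show r1 ∈ Ioi 0 from hr10) hx.2.le
      rw [hz, h00] at h2
      linarith
    · have hloc : IsLocalMin u t0 := by
        filter_upwards [Icc_mem_nhds h00 ht1] with x hx using hmin hx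
      have hd0 := hloc.deriv_eq_zero
      have h2 := S.E_anti N (show t0 ∈ Ioi 0 from h00) (show r1 ∈ Ioi 0 from hr10) ht1.le
      simp only [hd0, hz] at h2
      linarith

lemma strictAnti (S : Sol k f u) (N : Nl f F β) : StrictAntiOn u (Ici 0) := by
  refine strictAntiOn_of_deriv_neg (convex_Ici 0) S.cont ?_
  intro x hx
  rw [interior_Ici] at hx
  exact S.deriv_neg N x hx

/-- Decay of the weighted energy. -/
lemma decay (S : Sol k f u) (N : Nl f F β) :
    Tendsto (fun r => r ^ (2 * k) * (deriv u r ^ 2 / 2 + F (u r))) atTop (𝓝 0) := by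
  obtain ⟨δ, c, hδ, hc, hanti, hsm⟩ := N.hsm
  obtain ⟨R, hR⟩ := eventually_atTop.1 (S.lim.eventually (gt_mem_nhds hδ))
  set a := max R 1
  have ha1 : 1 ≤ a := le_max_right R 1
  have haR : R ≤ a := le_max_left R 1
  have hsu : ∀ x ≥ a, f (u x) < 0 ∧ F (u x) ≤ -(c * u x) ^ 2 / 2 := fun x hx =>
    hsm (u x) ⟨S.pos x (by linarith), hR x (by linarith)⟩
  have hexp : AntitoneOn (fun r => u r * exp (c * r)) (Ici a) := by
    refine anti_of (convex_Ici a) (fun x hx => (S.hd x (by have : a ≤ x := hx; linarith)).mul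
      ((hasDerivAt_id x).const_mul c).exp) ?_
    intro x hx
    rw [interior_Ici] at hx
    have hx : a < x := hx
    have hx0 : 0 < x := by linarith
    have h1 := (hsu x hx.le).2
    have h2 := S.E_nonneg N hx0
    have h3 := S.deriv_neg N x hx0
    have h4 := S.pos x hx0.le
    have h5 : c * u x ≤ - deriv u x := by
      have : (c * u x) ^ 2 ≤ (- deriv u x) ^ 2 := by nlinarith
      exact le_of_sq_le_sq this (by linarith)
    have h6 := exp_pos (c * x)
    simp only [id, mul_one]
    nlinarith
  set C := u a * exp (c * a)
  have hC0 : 0 < C := mul_pos (S.pos a (by linarith)) (exp_pos _)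
  have hub : ∀ x ≥ a, u x ≤ C * exp (-(c * x)) := by
    intro x hx
    have := hexp self_mem_Ici hx hx
    simp only at this
    rw [exp_neg, ← div_eq_mul_inv, le_div_iff₀ (exp_pos _)]
    exact this
  have hA : AntitoneOn (fun r => -(r ^ k * deriv u r)) (Ici a) := by
    refine anti_of (convex_Ici a)
      (fun x hx => (S.hdw (by have : a ≤ x := hx; linarith)).neg) ?_
    intro x hx
    rw [interior_Ici] at hx
    have hx : a < x := hx
    have := (hsu x hx.le).1
    have := pow_pos (show 0 < x by linarith) k
    nlinarith
  have hder : ∀ x ≥ a + 1, - deriv u x ≤ C * exp (-(c * (x - 1))) := by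
    intro x hx
    obtain ⟨t, ht, ht'⟩ := exists_hasDerivAt_eq_slope u (deriv u) (show x - 1 < x by linarith)
      (S.cont.mono (fun y hy => by have := hy.1; simp; linarith))
      (fun y hy => S.hd y (by have := hy.1; linarith))
    have h1 : - deriv u t ≤ u (x - 1) := by
      rw [ht']
      have : x - (x - 1) = 1 := by ring
      rw [this, div_one]
      linarith [S.pos x (by linarith)]
    have h2 := hA (show t ∈ Ici a by simp; linarith [ht.1]) (show x ∈ Ici a by simp; linarith)
      ht.2.le
    simp only at h2
    have h3 : t ^ k ≤ x ^ k := pow_le_pow_left₀ (by linarith [ht.1]) ht.2.le k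
    have h4 := S.deriv_neg N t (by linarith [ht.1])
    have h5 : x ^ k * (- deriv u x) ≤ x ^ k * (- deriv u t) := by nlinarith
    have h6 := le_of_mul_le_mul_left h5 (pow_pos (by linarith) k)
    linarith [hub (x - 1) (by linarith)]
  have hlim : Tendsto (fun r => (C ^ 2 * exp (2 * c)) / c ^ (2 * k) / 2 *
      ((c * r) ^ (2 * k) * exp (-(c * r)))) atTop (𝓝 0) := by
    have h1 : Tendsto (fun r : ℝ => c * r) atTop atTop := tendsto_id.const_mul_atTop hc
    have := ((Real.tendsto_pow_mul_exp_neg_atTop_nhds_zero (2 * k)).comp h1).const_mul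
      ((C ^ 2 * exp (2 * c)) / c ^ (2 * k) / 2)
    simpa using this
  refine squeeze_zero' ?_ ?_ hlim
  · filter_upwards [eventually_ge_atTop 1] with r hr
    exact mul_nonneg (by positivity) (S.E_nonneg N (by linarith))
  · filter_upwards [eventually_ge_atTop (a + 1)] with r hr
    have h1 := hder r hr
    have h2 := S.deriv_neg N r (by linarith)
    have h3 : deriv u r ^ 2 ≤ (C * exp (-(c * (r - 1)))) ^ 2 := by nlinarith
    have h4 : F (u r) ≤ 0 := (hsu r (by linarith)).2.trans (by nlinarith [sq_nonneg (c * u r)])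
    have h5 : (C * exp (-(c * (r - 1)))) ^ 2 ≤ C ^ 2 * exp (2 * c) * exp (-(c * r)) := by
      rw [mul_pow, mul_assoc, ← exp_nat_mul, ← exp_add]
      gcongr
      push_cast
      nlinarith
    have h6 : (C ^ 2 * exp (2 * c)) / c ^ (2 * k) / 2 *
      ((c * r) ^ (2 * k) * exp (-(c * r))) =
      r ^ (2 * k) * (C ^ 2 * exp (2 * c) * exp (-(c * r)) / 2) := by
      rw [mul_pow c r]; field_simp
    rw [h6]
    have : 0 ≤ r := by linarith
    gcongr
    linarith

end Sol


/-! ### Inverse functions -/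

/-- The solution written as a function of the height `z`: `ρ` is the inverse function and
`P = |u'|`. -/
structure HInv (k : ℕ) (f F : ℝ → ℝ) (b : ℝ) (ρ P : ℝ → ℝ) : Prop where
  pos : ∀ z ∈ Ioo 0 b, 0 < ρ z
  Ppos : ∀ z ∈ Ioo 0 b, 0 < P z
  hd : ∀ z ∈ Ioo 0 b, HasDerivAt ρ (-(1 / P z)) z
  hdP : ∀ z ∈ Ioo 0 b, HasDerivAt P (k / ρ z - f z / P z) z
  limP : Tendsto P (𝓝[>] 0) (𝓝 0)
  limG : Tendsto (fun z => ρ z ^ (2 * k) * (P z ^ 2 / 2 + F z)) (𝓝[>] 0) (𝓝 0)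
  Enn : ∀ z ∈ Ioo 0 b, 0 ≤ P z ^ 2 / 2 + F z

namespace Sol
variable {k : ℕ} {f F u : ℝ → ℝ} {β : ℝ}

lemma deriv_lim (S : Sol k f u) (N : Nl f F β) : Tendsto (deriv u) atTop (𝓝 0) := by
  have h1 : Tendsto (fun r => deriv u r ^ 2 / 2 + F (u r)) atTop (𝓝 0) := by
    refine squeeze_zero' ?_ ?_ (S.decay N)
    · filter_upwards [eventually_gt_atTop 0] with r hr using S.E_nonneg N hr
    · filter_upwards [eventually_ge_atTop 1] with r hr
      have := S.E_nonneg N (r := r) (by linarith)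
      exact le_mul_of_one_le_left this (one_le_pow₀ hr)
  have h2 : Tendsto (fun r => deriv u r ^ 2) atTop (𝓝 0) := by
    have := (h1.sub (S.limF N)).const_mul 2
    simp only [sub_zero, mul_zero] at this
    refine this.congr (fun r => by ring)
  have h3 := h2.sqrt
  simp only [sqrt_sq_eq_abs, sqrt_zero] at h3
  exact (tendsto_zero_iff_abs_tendsto_zero _).2 h3

lemma exists_inv (S : Sol k f u) (N : Nl f F β) : ∃ ρ : ℝ → ℝ,
    (∀ z ∈ Ioo 0 (u 0), u (ρ z) = z) ∧ (∀ r > 0, ρ (u r) = r) ∧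
    HInv k f F (u 0) ρ (fun z => -deriv u (ρ z)) := by
  have hsa := S.strictAnti N
  have hmem : ∀ r > 0, u r ∈ Ioo 0 (u 0) := fun r hr =>
    ⟨S.pos r hr.le, hsa self_mem_Ici (show r ∈ Ici 0 from le_of_lt hr) hr⟩
  have hsurj : ∀ z ∈ Ioo 0 (u 0), ∃ r, 0 < r ∧ u r = z := by
    intro z hz
    obtain ⟨R, hR, hR0⟩ := ((S.lim.eventually (gt_mem_nhds hz.1)).and
      (eventually_gt_atTop 0)).exists
    obtain ⟨r, hr, hr'⟩ := intermediate_value_Ioo' hR0.le (S.cont.mono (fun x hx => hx.1))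
      ⟨hR, hz.2⟩
    exact ⟨r, hr.1, hr'⟩
  have : ∀ z, ∃ r, z ∈ Ioo 0 (u 0) → 0 < r ∧ u r = z := fun z => by
    by_cases hz : z ∈ Ioo 0 (u 0)
    · obtain ⟨r, hr⟩ := hsurj z hz; exact ⟨r, fun _ => hr⟩
    · exact ⟨0, fun h => absurd h hz⟩
  choose ρ hρ using this
  have hρ0 : ∀ z ∈ Ioo 0 (u 0), 0 < ρ z := fun z hz => (hρ z hz).1
  have hρu : ∀ z ∈ Ioo 0 (u 0), u (ρ z) = z := fun z hz => (hρ z hz).2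
  have hleft : ∀ r > 0, ρ (u r) = r := by
    intro r hr
    have h1 := hρ (u r) (hmem r hr)
    exact hsa.injOn (show ρ (u r) ∈ Ici 0 from h1.1.le) (show r ∈ Ici 0 from le_of_lt hr) h1.2
  have hanti : StrictMonoOn (fun z => -ρ z) (Ioo 0 (u 0)) := by
    intro x hx y hy hxy
    simp only [neg_lt_neg_iff]
    by_contra h
    push Not at h
    have := hsa.antitoneOn (show ρ x ∈ Ici 0 from (hρ0 x hx).le)
      (show ρ y ∈ Ici 0 from (hρ0 y hy).le) h
    rw [hρu x hx, hρu y hy] at this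
    linarith
  have hcont : ∀ z ∈ Ioo 0 (u 0), ContinuousAt ρ z := by
    intro z hz
    have := hanti.continuousAt_of_image_mem_nhds (Ioo_mem_nhds hz.1 hz.2) (by
      refine mem_of_superset (Iio_mem_nhds (show -ρ z < 0 by linarith [hρ0 z hz])) ?_
      intro y hy
      have hy : y < 0 := hy
      exact ⟨u (-y), hmem _ (by linarith), by simp [hleft (-y) (by linarith)]⟩)
    have h2 := this.neg
    rwa [show (-fun z => -ρ z) = ρ by ext; simp] at h2
  have hdneg : ∀ z ∈ Ioo 0 (u 0), deriv u (ρ z) < 0 := fun z hz => S.deriv_neg N _ (hρ0 z hz)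
  have hd : ∀ z ∈ Ioo 0 (u 0), HasDerivAt ρ (-(1 / -deriv u (ρ z))) z := by
    intro z hz
    have := HasDerivAt.of_local_left_inverse (hcont z hz) (S.hd _ (hρ0 z hz)) (hdneg z hz).ne
      (by filter_upwards [Ioo_mem_nhds hz.1 hz.2] with y hy using hρu y hy)
    refine this.congr_deriv ?_
    have := (hdneg z hz).ne
    field_simp
  have htop : Tendsto ρ (𝓝[>] 0) atTop := by
    refine tendsto_atTop.2 (fun R => ?_)
    have hR : (0 : ℝ) < max R 1 := by positivity
    filter_upwards [Ioo_mem_nhdsGT (S.pos _ hR.le)] with z hz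
    have hz' : z ∈ Ioo 0 (u 0) := ⟨hz.1, hz.2.trans (hmem _ hR).2⟩
    by_contra h
    push Not at h
    have h1 : ρ z < max R 1 := h.trans_le (le_max_left _ _)
    have := hsa (show ρ z ∈ Ici 0 from (hρ0 z hz').le) (show max R 1 ∈ Ici 0 from hR.le) h1
    rw [hρu z hz'] at this
    linarith [hz.2]
  have hev : ∀ᶠ z in 𝓝[>] 0, z ∈ Ioo 0 (u 0) := Ioo_mem_nhdsGT (S.pos 0 le_rfl)
  refine ⟨ρ, hρu, hleft, hρ0, fun z hz => by linarith [hdneg z hz], hd, ?_, ?_, ?_, ?_⟩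
  · intro z hz
    refine ((S.hdd _ (hρ0 z hz)).comp z (hd z hz)).neg.congr_deriv ?_
    have h1 := (hdneg z hz).ne
    have h2 := (hρ0 z hz).ne'
    rw [hρu z hz]
    field_simp
    ring
  · simpa using ((S.deriv_lim N).comp htop).neg
  · refine ((S.decay N).comp htop).congr' ?_
    filter_upwards [hev] with z hz
    simp [hρu z hz]
  · intro z hz
    have := S.E_nonneg N (hρ0 z hz)
    rw [hρu z hz] at this
    simpa using this

end Sol

lemma hasDerivAt_posPart_sq (x : ℝ) :
    HasDerivAt (fun x : ℝ => (max x 0) ^ 2) (2 * max x 0) x := by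
  rcases lt_trichotomy x 0 with h | h | h
  · rw [max_eq_right h.le, mul_zero]
    refine (hasDerivAt_const x (0 : ℝ)).congr_of_eventuallyEq ?_
    filter_upwards [gt_mem_nhds h] with y hy
    simp [max_eq_right hy.le]
  · subst h
    rw [hasDerivAt_iff_isLittleO]
    simp only [max_self, mul_zero, smul_zero, sub_zero, ne_eq, OfNat.ofNat_ne_zero,
      not_false_eq_true, zero_pow]
    have h1 : (fun x : ℝ => (max x 0) ^ 2) =O[𝓝 0] (fun x => x ^ 2) := by
      refine Asymptotics.IsBigO.of_bound 1 (Eventually.of_forall fun y => ?_)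
      rw [one_mul, Real.norm_eq_abs, Real.norm_eq_abs, abs_of_nonneg (by positivity),
        abs_of_nonneg (by positivity)]
      rcases le_total y 0 with h | h
      · simp [max_eq_right h]; positivity
      · simp [max_eq_left h]
    refine h1.trans_isLittleO ?_
    simpa using Asymptotics.isLittleO_pow_id (𝕜 := ℝ) (n := 2) (by norm_num)
  · rw [max_eq_left h.le]
    have := (hasDerivAt_pow 2 x)
    refine (this.congr_deriv (by simp)).congr_of_eventuallyEq ?_
    filter_upwards [lt_mem_nhds h] with y hy
    simp [max_eq_left hy.le]

namespace HInv
variable {k : ℕ} {f F ρ P σ Q : ℝ → ℝ} {β b b' z1 : ℝ}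

lemma hdD (I : HInv k f F b ρ P) (J : HInv k f F b' σ Q) {z : ℝ} (hz : z ∈ Ioo 0 b)
    (hz' : z ∈ Ioo 0 b') : HasDerivAt (fun z => P z - Q z)
      (k * (1 / ρ z - 1 / σ z) + f z / (P z * Q z) * (P z - Q z)) z := by
  refine ((I.hdP z hz).sub (J.hdP z hz')).congr_deriv ?_
  have h1 := (I.Ppos z hz).ne'
  have h2 := (J.Ppos z hz').ne'
  have h3 := (I.pos z hz).ne'
  have h4 := (J.pos z hz').ne'
  field_simp
  ring

lemma contH (I : HInv k f F b ρ P) (J : HInv k f F b' σ Q) (N : Nl f F β)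
    (h1 : z1 < b) (h2 : z1 < b') : ContinuousOn (fun z => f z / (P z * Q z)) (Ioc 0 z1) := by
  have hb : ∀ z ∈ Ioc 0 z1, z ∈ Ioo 0 b := fun z hz => ⟨hz.1, hz.2.trans_lt h1⟩
  have hb' : ∀ z ∈ Ioc 0 z1, z ∈ Ioo 0 b' := fun z hz => ⟨hz.1, hz.2.trans_lt h2⟩
  refine ContinuousOn.div (N.hfc.mono (fun z hz => hz.1)) (ContinuousOn.mul ?_ ?_) ?_
  · exact fun z hz => (I.hdP z (hb z hz)).continuousAt.continuousWithinAt
  · exact fun z hz => (J.hdP z (hb' z hz)).continuousAt.continuousWithinAt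
  · exact fun z hz => (mul_pos (I.Ppos z (hb z hz)) (J.Ppos z (hb' z hz))).ne'

lemma le' (I : HInv k f F b ρ P) (J : HInv k f F b' σ Q) (N : Nl f F β)
    (h1 : z1 < b) (h2 : z1 < b') (hlt : ∀ z ∈ Ioo 0 z1, (k : ℝ) * (1 / ρ z - 1 / σ z) ≤ 0) :
    ∀ z ∈ Ioc 0 z1, P z ≤ Q z := by
  have hb : ∀ z ∈ Ioc 0 z1, z ∈ Ioo 0 b := fun z hz => ⟨hz.1, hz.2.trans_lt h1⟩
  have hb' : ∀ z ∈ Ioc 0 z1, z ∈ Ioo 0 b' := fun z hz => ⟨hz.1, hz.2.trans_lt h2⟩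
  obtain ⟨K, hK0, hK⟩ : ∃ K, 0 ≤ K ∧ ∀ z ∈ Ioc 0 z1, f z / (P z * Q z) ≤ K := by
    obtain ⟨δ, c, hδ, hc, -, hsm⟩ := N.hsm
    obtain ⟨K, hK⟩ := isCompact_Icc.exists_bound_of_continuousOn
      ((I.contH J N h1 h2).mono (fun z (hz : z ∈ Icc (δ / 2) z1) => ⟨by linarith [hz.1], hz.2⟩))
    refine ⟨max K 0, le_max_right _ _, fun z hz => ?_⟩
    rcases lt_or_ge z (δ / 2) with h | h
    · refine le_trans ?_ (le_max_right _ _)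
      exact div_nonpos_of_nonpos_of_nonneg (hsm z ⟨hz.1, by linarith⟩).1.le
        (mul_pos (I.Ppos z (hb z hz)) (J.Ppos z (hb' z hz))).le
    · exact ((le_abs_self _).trans (hK z ⟨h, hz.2⟩)).trans (le_max_left _ _)
  have key : AntitoneOn (fun z => (max (P z - Q z) 0) ^ 2 * exp (-(2 * K) * z)) (Ioc 0 z1) := by
    refine anti_of (convex_Ioc 0 z1) (fun z hz =>
      (HasDerivAt.comp (h := fun z => P z - Q z) z (hasDerivAt_posPart_sq (P z - Q z)) (I.hdD J (hb z hz) (hb' z hz))).mul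
      ((hasDerivAt_id z).const_mul (-(2 * K))).exp) ?_
    intro z hz
    have hz2 := interior_subset hz
    rw [interior_Ioc] at hz
    have h4 := hlt z hz
    have h5 := hK z hz2
    have h6 := exp_pos (-(2 * K) * z)
    simp only [Function.comp, id, mul_one]
    set H := f z / (P z * Q z)
    set D := P z - Q z
    have h7 : max D 0 * (k * (1 / ρ z - 1 / σ z) + H * D) ≤ K * max D 0 ^ 2 := by
      rcases le_total D 0 with h | h
      · simp [max_eq_right h]
      · rw [max_eq_left h]; nlinarith
    nlinarith
  have hlim : Tendsto (fun z => (max (P z - Q z) 0) ^ 2 * exp (-(2 * K) * z)) (𝓝[>] 0) (𝓝 0) := by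
    have e1 : Tendsto (fun z => exp (-(2 * K) * z)) (𝓝[>] 0) (𝓝 (exp (-(2 * K) * 0))) :=
      (Continuous.tendsto (by fun_prop) 0).mono_left nhdsWithin_le_nhds
    have e2 := (((I.limP.sub J.limP).max (tendsto_const_nhds (x := (0 : ℝ)))).pow 2).mul e1
    simpa using e2
  intro z hz
  have h3 : (max (P z - Q z) 0) ^ 2 * exp (-(2 * K) * z) ≤ 0 := by
    refine ge_of_tendsto hlim ?_
    filter_upwards [Ioo_mem_nhdsGT hz.1] with y hy
    exact key ⟨hy.1, hy.2.le.trans hz.2⟩ hz hy.2.le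
  by_contra h
  push Not at h
  have h4 : 0 < max (P z - Q z) 0 := lt_max_of_lt_left (by linarith)
  have := mul_pos (pow_pos h4 2) (exp_pos (-(2 * K) * z))
  linarith

lemma le (I : HInv k f F b ρ P) (J : HInv k f F b' σ Q) (N : Nl f F β)
    (h1 : z1 < b) (h2 : z1 < b') (hlt : ∀ z ∈ Ioo 0 z1, σ z < ρ z) :
    ∀ z ∈ Ioc 0 z1, P z ≤ Q z := by
  refine I.le' J N h1 h2 (fun z hz => ?_)
  have hs := J.pos z ⟨hz.1, hz.2.trans h2⟩
  have := one_div_le_one_div_of_le hs (hlt z hz).le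
  have : (0 : ℝ) ≤ k := by positivity
  nlinarith

lemma lt (I : HInv k f F b ρ P) (J : HInv k f F b' σ Q) (N : Nl f F β) (hk : 0 < k) (h0 : 0 < z1)
    (h1 : z1 < b) (h2 : z1 < b') (hlt : ∀ z ∈ Ioo 0 z1, σ z < ρ z) : P z1 < Q z1 := by
  have hle := I.le J N h1 h2 hlt
  have hb : ∀ z ∈ Ioc 0 z1, z ∈ Ioo 0 b := fun z hz => ⟨hz.1, hz.2.trans_lt h1⟩
  have hb' : ∀ z ∈ Ioc 0 z1, z ∈ Ioo 0 b' := fun z hz => ⟨hz.1, hz.2.trans_lt h2⟩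
  have hsub : ∀ z ∈ Icc (z1 / 2) z1, z ∈ Ioc 0 z1 := fun z hz => ⟨by linarith [hz.1], hz.2⟩
  obtain ⟨K, hK⟩ := isCompact_Icc.exists_bound_of_continuousOn
      ((I.contH J N h1 h2).mono hsub)
  have key : StrictAntiOn (fun z => (P z - Q z) * exp (K * z)) (Icc (z1 / 2) z1) := by
    refine santi_of (convex_Icc _ _) (fun z hz =>
      (I.hdD J (hb z (hsub z hz)) (hb' z (hsub z hz))).mul
      ((hasDerivAt_id z).const_mul K).exp) ?_
    intro z hz
    have hz2 := interior_subset hz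
    rw [interior_Icc] at hz
    have h3 := hlt z ⟨by linarith [hz.1], hz.2⟩
    have hs := J.pos z (hb' z (hsub z hz2))
    have h4 : (k : ℝ) * (1 / ρ z - 1 / σ z) < 0 := by
      have := one_div_lt_one_div_of_lt hs h3
      have : (0 : ℝ) < k := by positivity
      nlinarith
    have h5 := (neg_le_abs _).trans (hK z hz2)
    have h6 := exp_pos (K * z)
    have h7 := hle z (hsub z hz2)
    simp only [id, mul_one]
    set H := f z / (P z * Q z)
    have h8 : (k * (1 / ρ z - 1 / σ z) + H * (P z - Q z)) + (P z - Q z) * K < 0 := by nlinarith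
    nlinarith
  have h3 := key ⟨le_rfl, by linarith⟩ ⟨by linarith, le_rfl⟩ (show z1 / 2 < z1 by linarith)
  simp only at h3
  have h4 := hle (z1 / 2) ⟨by linarith, by linarith⟩
  have h5 : (P z1 - Q z1) * exp (K * z1) < 0 :=
    h3.trans_le (mul_nonpos_of_nonpos_of_nonneg (by linarith) (exp_pos _).le)
  have := neg_of_mul_neg_left h5 (exp_pos _).le
  linarith

lemma hdG (I : HInv (k + 1) f F b ρ P) (N : Nl f F β) {z : ℝ} (hz : z ∈ Ioo 0 b) :
    HasDerivAt (fun z => ρ z ^ (2 * (k + 1)) * (P z ^ 2 / 2 + F z))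
      (2 * (k + 1) * ρ z ^ (2 * k + 1) / P z * -F z) z := by
  have h := ((I.hd z hz).pow (2 * (k + 1))).mul
    ((((I.hdP z hz).pow 2).div_const 2).add (N.hF z hz.1))
  refine h.congr_deriv ?_
  have h1 := (I.Ppos z hz).ne'
  have h3 := (I.pos z hz).ne'
  simp [show 2 * (k + 1) - 1 = 2 * k + 1 by omega, show 2 * (k + 1) = 2 * k + 1 + 1 by omega]
  field_simp
  ring

/-- Crossings cannot take place at height at most `β`. -/
lemma no_low_crossing (I : HInv k f F b ρ P) (J : HInv k f F b' σ Q) (N : Nl f F β) (hk : 0 < k)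
    (h0 : 0 < z1) (h1 : z1 < b) (h2 : z1 < b') (hlt : ∀ z ∈ Ioo 0 z1, σ z < ρ z)
    (heq : ρ z1 = σ z1) : β < z1 := by
  by_contra hβ
  push Not at hβ
  have hPQ := I.lt J N hk h0 h1 h2 hlt
  have hle := I.le J N h1 h2 hlt
  have hb : ∀ z ∈ Ioc 0 z1, z ∈ Ioo 0 b := fun z hz => ⟨hz.1, hz.2.trans_lt h1⟩
  have hb' : ∀ z ∈ Ioc 0 z1, z ∈ Ioo 0 b' := fun z hz => ⟨hz.1, hz.2.trans_lt h2⟩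
  obtain ⟨k, rfl⟩ : ∃ l, k = l + 1 := ⟨k - 1, by omega⟩
  have key : MonotoneOn (fun z => ρ z ^ (2 * (k + 1)) * (P z ^ 2 / 2 + F z) -
      σ z ^ (2 * (k + 1)) * (Q z ^ 2 / 2 + F z)) (Ioc 0 z1) := by
    refine mono_of (convex_Ioc 0 z1) (fun z hz =>
      (I.hdG N (hb z hz)).sub (J.hdG N (hb' z hz))) ?_
    intro z hz
    have hz2 := interior_subset hz
    rw [interior_Ioc] at hz
    have h3 := (hlt z hz).le
    have hs := J.pos z (hb' z hz2)
    have hP := I.Ppos z (hb z hz2)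
    have hF := N.hneg z hz.1 (hz.2.le.trans hβ)
    have h4 := hle z hz2
    rw [← sub_mul]
    refine mul_nonneg (sub_nonneg.2 ?_) (by linarith)
    have hr := I.pos z (hb z hz2)
    gcongr
  have h3 : 0 ≤ ρ z1 ^ (2 * (k + 1)) * (P z1 ^ 2 / 2 + F z1) -
      σ z1 ^ (2 * (k + 1)) * (Q z1 ^ 2 / 2 + F z1) := by
    have hl := J.limG.neg
    rw [neg_zero] at hl
    refine le_of_tendsto hl ?_
    filter_upwards [Ioo_mem_nhdsGT h0] with z hz
    have hz2 : z ∈ Ioc 0 z1 := ⟨hz.1, hz.2.le⟩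
    refine le_trans ?_ (key hz2 ⟨h0, le_rfl⟩ hz.2.le)
    have := mul_nonneg (pow_nonneg (I.pos z (hb z hz2)).le (2 * (k + 1))) (I.Enn z (hb z hz2))
    simp only
    linarith
  rw [heq, ← mul_sub] at h3
  have hz1 : z1 ∈ Ioc 0 z1 := ⟨h0, le_rfl⟩
  have h4 := nonneg_of_mul_nonneg_right h3 (pow_pos (J.pos z1 (hb' z1 hz1)) _)
  have := I.Ppos z1 (hb z1 hz1)
  nlinarith

end HInv


namespace Sol
variable {k : ℕ} {f F u v : ℝ → ℝ} {β : ℝ}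

/-- Comparison above `β`: a crossing at height above `β` is impossible. -/
lemma no_high_crossing (U : Sol k f u) (V : Sol k f v) (N : Nl f F β) {r0 : ℝ} (hr0 : 0 < r0)
    (heq : u r0 = v r0) (hβ : β < u r0) (hd : deriv v r0 < deriv u r0) : False := by
  have hua := U.strictAnti N
  have hw : ∀ r > 0, HasDerivAt (fun r => u r - v r) (deriv u r - deriv v r) r :=
    fun r hr => (U.hd r hr).sub (V.hd r hr)
  have hdJ : ∀ r > 0, HasDerivAt
      (fun r => r ^ k * deriv v r * (u r - β) - r ^ k * deriv u r * (v r - β))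
      (r ^ k * (f (u r) * (v r - β) - f (v r) * (u r - β))) r := by
    intro r hr
    refine (((V.hdw hr).mul ((U.hd r hr).sub_const β)).sub
      ((U.hdw hr).mul ((V.hd r hr).sub_const β))).congr_deriv ?_
    ring
  have hJ0 : r0 ^ k * deriv v r0 * (u r0 - β) - r0 ^ k * deriv u r0 * (v r0 - β) < 0 := by
    rw [← heq]
    have h1 : 0 < r0 ^ k := by positivity
    have h2 := mul_pos (mul_pos h1 (sub_pos.2 hβ)) (sub_pos.2 hd)
    nlinarith
  have hJpos : ∀ r > 0, r < r0 → u r < v r →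
      0 < r ^ k * (f (u r) * (v r - β) - f (v r) * (u r - β)) := by
    intro r hr hrr0 hlt
    have h1 := hua (show r ∈ Ici 0 from le_of_lt hr) (show r0 ∈ Ici 0 from hr0.le) hrr0
    have := N.hconc (u r) (v r) (by linarith) hlt
    exact mul_pos (by positivity) (by linarith)
  set T := {t | 0 < t ∧ t < r0 ∧ v t ≤ u t}
  rcases T.eq_empty_or_nonempty with hT | hT
  · have hlt : ∀ r > 0, r < r0 → u r < v r := by
      intro r hr h
      by_contra hc
      push Not at hc
      have : r ∈ T := ⟨hr, h, hc⟩
      rw [hT] at this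
      exact this
    have hm := smono_of (convex_Ioc 0 r0) (fun r hr => hdJ r hr.1) (by
      intro r hr
      rw [interior_Ioc] at hr
      exact hJpos r hr.1 hr.2 (hlt r hr.1 hr.2))
    have hp : Tendsto (fun r : ℝ => r ^ k) (𝓝[>] 0) (𝓝 (0 ^ k)) :=
      (Continuous.tendsto (by fun_prop) 0).mono_left nhdsWithin_le_nhds
    have hlim := ((hp.mul (V.deriv_tendsto0 N)).mul (U.tendsto0.sub_const β)).sub
      ((hp.mul (U.deriv_tendsto0 N)).mul (V.tendsto0.sub_const β))
    simp only [mul_zero, zero_mul, sub_zero] at hlim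
    have : 0 ≤ r0 ^ k * deriv v r0 * (u r0 - β) - r0 ^ k * deriv u r0 * (v r0 - β) := by
      refine le_of_tendsto hlim ?_
      filter_upwards [Ioo_mem_nhdsGT hr0] with y hy
      exact hm.monotoneOn ⟨hy.1, hy.2.le⟩ ⟨hr0, le_rfl⟩ hy.2.le
    linarith
  · have e1 := ev_left_lt (hw r0 hr0) (by linarith)
    obtain ⟨l, hl, hl'⟩ := (mem_nhdsLT_iff_exists_Ioo_subset).1 e1
    have hl : l < r0 := hl
    have hTl : ∀ t ∈ T, t ≤ l := by
      intro t ht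
      by_contra h
      push Not at h
      have : u t - v t < u r0 - v r0 := hl' ⟨h, ht.2.1⟩
      linarith [ht.2.2]
    have hTb : BddAbove T := ⟨l, hTl⟩
    set a := sSup T
    have har0 : a < r0 := (csSup_le hT hTl).trans_lt hl
    have ha0 : 0 < a := by
      obtain ⟨t, ht⟩ := hT
      exact ht.1.trans_le (le_csSup hTb ht)
    have hlt : ∀ r, a < r → r < r0 → u r < v r := by
      intro r hr h
      by_contra hc
      push Not at hc
      exact absurd (le_csSup hTb (show r ∈ T from ⟨ha0.trans hr, h, hc⟩)) (not_le.2 hr)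
    have hca := (hw a ha0).continuousAt
    have hge : 0 ≤ u a - v a := by
      by_contra h
      push Not at h
      have h1 := hca.eventually (gt_mem_nhds h)
      have h2 := (mem_closure_iff_frequently.1 (csSup_mem_closure hT hTb))
      obtain ⟨x, hx, hx'⟩ := (h2.and_eventually h1).exists
      linarith [hx.2.2]
    have hle : u a - v a ≤ 0 := by
      refine le_of_tendsto (hca.tendsto.mono_left (nhdsWithin_le_nhds (s := Ioi a))) ?_
      filter_upwards [Ioo_mem_nhdsGT har0] with x hx
      linarith [hlt x hx.1 hx.2]
    have hda : deriv u a - deriv v a ≤ 0 := by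
      by_contra h
      push Not at h
      obtain ⟨x, hx, hx'⟩ := ((ev_right_gt (hw a ha0) h).and (Ioo_mem_nhdsGT har0)).exists
      linarith [hlt x hx'.1 hx'.2]
    have hm := smono_of (convex_Icc a r0) (fun r hr => hdJ r (ha0.trans_le hr.1)) (by
      intro r hr
      rw [interior_Icc] at hr
      exact hJpos r (ha0.trans hr.1) hr.2 (hlt r hr.1 hr.2))
    have h1 := hm ⟨le_rfl, har0.le⟩ ⟨har0.le, le_rfl⟩ har0
    simp only at h1
    have h2 : v a = u a := by linarith
    rw [h2] at h1
    have h3 := hua (show a ∈ Ici 0 from ha0.le) (show r0 ∈ Ici 0 from hr0.le) har0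
    have h4 : 0 < a ^ k := by positivity
    have h5 := mul_nonneg (mul_nonneg h4.le (show 0 ≤ u a - β by linarith))
      (show 0 ≤ deriv v a - deriv u a by linarith)
    nlinarith

lemma main_false (U : Sol k f u) (V : Sol k f v) (N : Nl f F β) {R : ℝ} (hR0 : 0 < R)
    (hR : ∀ r ≥ R, v r < u r) (hne : u 0 ≠ v 0) : False := by
  have hua := U.strictAnti N
  have hva := V.strictAnti N
  obtain ⟨ρ, hρu, hρl, I⟩ := U.exists_inv N
  obtain ⟨σ, hσv, hσl, J⟩ := V.exists_inv N
  set P : ℝ → ℝ := fun z => -deriv u (ρ z) with hP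
  set Q : ℝ → ℝ := fun z => -deriv v (σ z) with hQ
  have hu0 := U.pos 0 le_rfl
  have hv0 := V.pos 0 le_rfl
  have hvR := V.pos R hR0.le
  have hvRm : v R < u 0 ∧ v R < v 0 := by
    have h1 := hua self_mem_Ici (show R ∈ Ici 0 from hR0.le) hR0
    have h2 := hva self_mem_Ici (show R ∈ Ici 0 from hR0.le) hR0
    exact ⟨(hR R le_rfl).trans h1, h2⟩
  have hsmall : ∀ z ∈ Ioo 0 (v R), σ z < ρ z := by
    intro z hz
    have hzu : z ∈ Ioo 0 (u 0) := ⟨hz.1, hz.2.trans hvRm.1⟩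
    have hzv : z ∈ Ioo 0 (v 0) := ⟨hz.1, hz.2.trans hvRm.2⟩
    have h1 : R < σ z := by
      by_contra h
      push Not at h
      have := hva.antitoneOn (show σ z ∈ Ici 0 from (J.pos z hzv).le)
        (show R ∈ Ici 0 from hR0.le) h
      rw [hσv z hzv] at this
      linarith [hz.2]
    by_contra h
    push Not at h
    have h2 := hua.antitoneOn (show ρ z ∈ Ici 0 from (I.pos z hzu).le)
      (show σ z ∈ Ici 0 from (J.pos z hzv).le) h
    have h3 := hR (σ z) h1.le
    rw [hσv z hzv] at h3
    rw [hρu z hzu] at h2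
    linarith
  set S := {z | 0 < z ∧ z < u 0 ∧ z < v 0 ∧ ρ z ≤ σ z}
  rcases S.eq_empty_or_nonempty with hS | hS
  · have hlt : ∀ z, 0 < z → z < u 0 → z < v 0 → σ z < ρ z := by
      intro z h1 h2 h3
      by_contra hc
      push Not at hc
      have : z ∈ S := ⟨h1, h2, h3, hc⟩
      rw [hS] at this
      exact this
    rcases lt_or_gt_of_ne hne with h | h
    · have e1 := U.tendsto0.eventually_lt V.tendsto0 h
      obtain ⟨r, hr, hr0⟩ := (e1.and self_mem_nhdsWithin).exists
      have hr0 : 0 < r := hr0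
      have hur : u r < u 0 := hua self_mem_Ici (show r ∈ Ici 0 from hr0.le) hr0
      have hz0 := U.pos r hr0.le
      have h1 := hlt (u r) hz0 hur (hur.trans h)
      rw [hρl r hr0] at h1
      have hzv : u r ∈ Ioo 0 (v 0) := ⟨hz0, hur.trans h⟩
      have h2 := hva (show σ (u r) ∈ Ici 0 from (J.pos _ hzv).le) (show r ∈ Ici 0 from hr0.le) h1
      rw [hσv _ hzv] at h2
      linarith
    · have hPQ : ∀ z, 0 < z → z < v 0 → P z ≤ Q z := by
        intro z h1 h2
        exact I.le J N (h2.trans h) h2 (fun y hy => hlt y hy.1 (hy.2.trans (h2.trans h))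
          (hy.2.trans h2)) z ⟨h1, le_rfl⟩
      have hmem : v 0 ∈ Ioo 0 (u 0) := ⟨hv0, h⟩
      have h1 : Tendsto (fun t => P (v t)) (𝓝[>] 0) (𝓝 (P (v 0))) :=
        (I.hdP _ hmem).continuousAt.tendsto.comp V.tendsto0
      have h2 : Tendsto (fun t => -deriv v t) (𝓝[>] 0) (𝓝 (-0)) := (V.deriv_tendsto0 N).neg
      have h3 : P (v 0) ≤ -0 := by
        refine le_of_tendsto_of_tendsto h1 h2 ?_
        filter_upwards [self_mem_nhdsWithin] with t ht
        have ht : 0 < t := ht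
        have h4 := hPQ (v t) (V.pos t ht.le) (hva self_mem_Ici (show t ∈ Ici 0 from ht.le) ht)
        simp only [hQ] at h4
        rwa [hσl t ht] at h4
      linarith [I.Ppos _ hmem]
  · have hSb : BddBelow S := ⟨0, fun z hz => hz.1.le⟩
    set z1 := sInf S
    have hz1R : v R ≤ z1 := by
      refine le_csInf hS (fun z hz => ?_)
      by_contra h
      push Not at h
      linarith [hsmall z ⟨hz.1, h⟩, hz.2.2.2]
    have hz0 : 0 < z1 := hvR.trans_le hz1R
    obtain ⟨zs, hzs⟩ := id hS
    have hz1s : z1 ≤ zs := csInf_le hSb hzs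
    have hz1u : z1 < u 0 := hz1s.trans_lt hzs.2.1
    have hz1v : z1 < v 0 := hz1s.trans_lt hzs.2.2.1
    have hlt : ∀ z ∈ Ioo 0 z1, σ z < ρ z := by
      intro z hz
      by_contra hc
      push Not at hc
      exact absurd (csInf_le hSb (show z ∈ S from ⟨hz.1, hz.2.trans hz1u, hz.2.trans hz1v, hc⟩))
        (not_le.2 hz.2)
    have hcI := (I.hd z1 ⟨hz0, hz1u⟩).continuousAt
    have hcJ := (J.hd z1 ⟨hz0, hz1v⟩).continuousAt
    have hle : ρ z1 ≤ σ z1 := by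
      by_contra h
      push Not at h
      have h1 := hcJ.tendsto.eventually_lt hcI.tendsto h
      have h2 := (mem_closure_iff_frequently.1 (csInf_mem_closure hS hSb))
      obtain ⟨x, hx, hx'⟩ := (h2.and_eventually h1).exists
      linarith [hx.2.2.2]
    rcases Nat.eq_zero_or_pos k with hk | hk
    · have hQP : ∀ z ∈ Ioc 0 z1, Q z ≤ P z :=
        J.le' I N hz1v hz1u (fun z hz => by simp [hk])
      have hm : MonotoneOn (fun z => ρ z - σ z) (Ioc 0 z1) := by
        refine mono_of (convex_Ioc 0 z1) (fun z hz => (I.hd z ⟨hz.1, hz.2.trans_lt hz1u⟩).sub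
          (J.hd z ⟨hz.1, hz.2.trans_lt hz1v⟩)) ?_
        intro z hz
        have hz := interior_subset hz
        have := one_div_le_one_div_of_le (J.Ppos z ⟨hz.1, hz.2.trans_lt hz1v⟩) (hQP z hz)
        linarith
      have h1 := hm ⟨half_pos hz0, by linarith⟩ ⟨hz0, le_rfl⟩ (show z1 / 2 ≤ z1 by linarith)
      have h2 := hlt (z1 / 2) ⟨half_pos hz0, by linarith⟩
      simp only at h1
      linarith
    · have hge : σ z1 ≤ ρ z1 := by
        refine le_of_tendsto_of_tendsto
          (hcJ.tendsto.mono_left (nhdsWithin_le_nhds (s := Iio z1)))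
          (hcI.tendsto.mono_left (nhdsWithin_le_nhds (s := Iio z1))) ?_
        filter_upwards [Ioo_mem_nhdsLT hz0] with z hz using (hlt z hz).le
      have heq : ρ z1 = σ z1 := le_antisymm hle hge
      have hβ := I.no_low_crossing J N hk hz0 hz1u hz1v hlt heq
      have hPQ := I.lt J N hk hz0 hz1u hz1v hlt
      have h1 := hρu z1 ⟨hz0, hz1u⟩
      have h2 := hσv z1 ⟨hz0, hz1v⟩
      rw [← heq] at h2
      refine no_high_crossing U V N (I.pos z1 ⟨hz0, hz1u⟩) (by rw [h1, h2]) (by rw [h1]; exact hβ) ?_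
      simp only [hP, hQ, ← heq] at hPQ
      linarith

/-- Maximum principle near infinity. -/
lemma le_at_infty (U : Sol k f u) (V : Sol k f v) {δ a : ℝ} (ha : 0 < a)
    (hanti : StrictAntiOn f (Ioo 0 δ)) (hu : ∀ r ≥ a, u r < δ) (hv : ∀ r ≥ a, v r < δ)
    (heq : u a = v a) : ∀ r ≥ a, u r ≤ v r := by
  intro b hb
  by_contra hc
  push Not at hc
  have hlim : Tendsto (fun r => u r - v r) atTop (𝓝 0) := by simpa using U.lim.sub V.lim
  obtain ⟨c, hc1, hbc⟩ := ((hlim.eventually (gt_mem_nhds (sub_pos.2 hc))).and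
    (eventually_gt_atTop b)).exists
  have hw : ∀ r > 0, HasDerivAt (fun r => u r - v r) (deriv u r - deriv v r) r :=
    fun r hr => (U.hd r hr).sub (V.hd r hr)
  have hac : a ≤ c := by linarith
  obtain ⟨t, ht, hmax⟩ := isCompact_Icc.exists_isMaxOn (nonempty_Icc.2 hac)
    (f := fun r => u r - v r)
    (fun x hx => (hw x (ha.trans_le hx.1)).continuousAt.continuousWithinAt)
  have htb : u b - v b ≤ u t - v t := hmax ⟨hb, hbc.le⟩
  have hta : a < t := lt_of_le_of_ne ht.1 (fun h => by rw [← h] at htb; linarith)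
  have htc : t < c := lt_of_le_of_ne ht.2 (fun h => by rw [h] at htb; linarith)
  have ht0 : 0 < t := ha.trans hta
  have hloc : IsLocalMax (fun r => u r - v r) t := by
    filter_upwards [Icc_mem_nhds hta htc] with x hx using hmax hx
  have hd0 := hloc.hasDerivAt_eq_zero (hw t ht0)
  have hflt := hanti ⟨V.pos t ht0.le, hv t hta.le⟩ ⟨U.pos t ht0.le, hu t hta.le⟩
    (show v t < u t by linarith)
  have hdd : HasDerivAt (fun r => deriv u r - deriv v r) (f (v t) - f (u t)) t := by
    refine ((U.hdd t ht0).sub (V.hdd t ht0)).congr_deriv ?_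
    have : deriv u t = deriv v t := by linarith
    rw [this]; ring
  have e1 := ev_right_gt hdd (by linarith)
  obtain ⟨l, hl, hl'⟩ := (mem_nhdsGT_iff_exists_Ioo_subset).1 e1
  have hl : t < l := hl
  set m := min l c
  have hm : t < m := lt_min hl htc
  have hmono := smono_of (convex_Icc t m) (fun r hr => hw r (ht0.trans_le hr.1)) (by
    intro r hr
    rw [interior_Icc] at hr
    have : deriv u t - deriv v t < deriv u r - deriv v r :=
      hl' ⟨hr.1, hr.2.trans_le (min_le_left l c)⟩
    linarith)
  have h1 := hmono ⟨le_rfl, hm.le⟩ ⟨hm.le, le_rfl⟩ hm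
  have h2 := hmax (show m ∈ Icc a c from ⟨(hta.trans hm).le, min_le_right l c⟩)
  simp only [mem_setOf_eq] at h1 h2
  linarith

lemma lip_between (U : Sol k f u) (V : Sol k f v) (N : Nl f F β) (b : ℝ) (hb : 0 ≤ b) :
    ∃ L, 0 ≤ L ∧ ∀ r ∈ Icc 0 b, |f (u r) - f (v r)| ≤ L * |u r - v r| := by
  obtain ⟨L, hL0, hL⟩ := N.hlip (min (u b) (v b)) (max (u 0) (v 0))
    (lt_min (U.pos b hb) (V.pos b hb))
  refine ⟨L, hL0, fun r hr => hL _ ⟨?_, ?_⟩ _ ⟨?_, ?_⟩⟩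
  · exact (min_le_left _ _).trans ((U.strictAnti N).antitoneOn hr.1 hb hr.2)
  · exact ((U.strictAnti N).antitoneOn self_mem_Ici hr.1 hr.1).trans (le_max_left _ _)
  · exact (min_le_right _ _).trans ((V.strictAnti N).antitoneOn hr.1 hb hr.2)
  · exact ((V.strictAnti N).antitoneOn self_mem_Ici hr.1 hr.1).trans (le_max_right _ _)

theorem unique (U : Sol k f u) (V : Sol k f v) (N : Nl f F β) : EqOn u v (Ici 0) := by
  by_cases h0 : u 0 = v 0
  · intro r hr
    have hr : 0 ≤ r := hr
    rcases hr.eq_or_lt with h | h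
    · rw [← h]; exact h0
    · obtain ⟨L, hL0, hL⟩ := U.lip_between V N (r + 1) (by linarith)
      refine gronwall_fwd (k := k) (f := f) (a := 0) (b := r + 1) le_rfl hL0
        (fun t ht => U.hd t ht.1) (fun t ht => V.hd t ht.1) (fun t ht => U.hdd t ht.1)
        (fun t ht => V.hdd t ht.1) (fun t ht => hL t ⟨ht.1.le, ht.2.le⟩) ?_ r ⟨h, by linarith⟩
      have := ((U.tendsto0.sub V.tendsto0).pow 2).add
        (((U.deriv_tendsto0 N).sub (V.deriv_tendsto0 N)).pow 2)
      simpa [h0] using this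
  · exfalso
    obtain ⟨δ, c, hδ, hc, hanti, -⟩ := N.hsm
    obtain ⟨R, hR⟩ := eventually_atTop.1 ((U.lim.eventually (gt_mem_nhds hδ)).and
      ((V.lim.eventually (gt_mem_nhds hδ)).and (eventually_gt_atTop 0)))
    have hR0 : 0 < R := (hR R le_rfl).2.2
    by_cases hex : ∃ a ≥ R, u a = v a
    · obtain ⟨a, haR, ha⟩ := hex
      have ha0 : 0 < a := hR0.trans_le haR
      have hle := U.le_at_infty V ha0 hanti (fun r hr => (hR r (haR.trans hr)).1)
        (fun r hr => (hR r (haR.trans hr)).2.1) ha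
      have hge := V.le_at_infty U ha0 hanti (fun r hr => (hR r (haR.trans hr)).2.1)
        (fun r hr => (hR r (haR.trans hr)).1) ha.symm
      have heq : ∀ r ≥ a, u r = v r := fun r hr => le_antisymm (hle r hr) (hge r hr)
      have hder : deriv u (a + 1) = deriv v (a + 1) := by
        refine Filter.EventuallyEq.deriv_eq ?_
        filter_upwards [lt_mem_nhds (show a < a + 1 by linarith)] with x hx using heq x hx.le
      obtain ⟨L, hL0, hL⟩ := U.lip_between V N (a + 1) (by linarith)
      have hall : ∀ r ∈ Ioo 0 (a + 1), u r = v r := by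
        intro r hr
        exact gronwall_bwd (k := k) (f := f) (a := r) (b := a + 1) hr.1 hL0
          (fun t ht => U.hd t (hr.1.trans_le ht.1)) (fun t ht => V.hd t (hr.1.trans_le ht.1))
          (fun t ht => U.hdd t (hr.1.trans_le ht.1)) (fun t ht => V.hdd t (hr.1.trans_le ht.1))
          (fun t ht => hL t ⟨hr.1.le.trans ht.1, ht.2⟩) (heq _ (by linarith)) hder r
          ⟨le_rfl, hr.2.le⟩
      refine h0 (tendsto_nhds_unique (U.tendsto0.congr' ?_) V.tendsto0)
      filter_upwards [Ioo_mem_nhdsGT (show (0 : ℝ) < a + 1 by linarith)] with r hr using hall r hr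
    · push Not at hex
      have hcw : ContinuousOn (fun r => u r - v r) (Ici R) := fun r hr =>
        ((U.hd r (hR0.trans_le hr)).sub (V.hd r (hR0.trans_le hr))).continuousAt.continuousWithinAt
      have hsign : (∀ r ≥ R, v r < u r) ∨ (∀ r ≥ R, u r < v r) := by
        by_contra hcon
        push Not at hcon
        obtain ⟨⟨x, hx, hx'⟩, y, hy, hy'⟩ := hcon
        have := (isPreconnected_Ici (a := R)).intermediate_value hx hy hcw
        obtain ⟨t, ht, ht'⟩ := this (show (0 : ℝ) ∈ Icc _ _ from
          ⟨by linarith, by linarith⟩)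
        exact hex t ht (by linarith)
      rcases hsign with h | h
      · exact main_false U V N hR0 h h0
      · exact main_false V U N hR0 h (Ne.symm h0)

end Sol


/-- the nonlinearity -/
noncomputable def fN (p ω z : ℝ) : ℝ := -ω * z + z ^ p - z ^ (2 * p - 1)

/-- its primitive -/
noncomputable def FN (p ω z : ℝ) : ℝ :=
  -ω * z ^ 2 / 2 + z ^ (p + 1) / (p + 1) - z ^ (2 * p) / (2 * p)

lemma fN_eq (p ω : ℝ) {z : ℝ} (hz : 0 < z) :
    fN p ω z = z * (-ω + z ^ (p - 1) - (z ^ (p - 1)) ^ 2) := by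
  have h1 : z ^ p = z * z ^ (p - 1) := by
    conv_lhs => rw [show p = 1 + (p - 1) by ring, Real.rpow_add hz, Real.rpow_one]
  have h2 : z ^ (2 * p - 1) = z * (z ^ (p - 1)) ^ 2 := by
    rw [show 2 * p - 1 = 1 + (p - 1) + (p - 1) by ring, Real.rpow_add hz, Real.rpow_add hz,
      Real.rpow_one]; ring
  rw [fN, h1, h2]; ring

lemma FN_eq (p ω : ℝ) {z : ℝ} (hz : 0 < z) :
    FN p ω z = z ^ 2 * (-ω / 2 + z ^ (p - 1) / (p + 1) - (z ^ (p - 1)) ^ 2 / (2 * p)) := by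
  have h1 : z ^ (p + 1) = z ^ 2 * z ^ (p - 1) := by
    rw [show p + 1 = 1 + 1 + (p - 1) by ring, Real.rpow_add hz, Real.rpow_add hz, Real.rpow_one]
    ring
  have h2 : z ^ (2 * p) = z ^ 2 * (z ^ (p - 1)) ^ 2 := by
    rw [show 2 * p = 1 + 1 + (p - 1) + (p - 1) by ring, Real.rpow_add hz, Real.rpow_add hz,
      Real.rpow_add hz, Real.rpow_one]; ring
  rw [FN, h1, h2]; ring

lemma fN_deriv (p ω : ℝ) {z : ℝ} (hz : 0 < z) :
    HasDerivAt (fN p ω) (-ω + p * z ^ (p - 1) - (2 * p - 1) * (z ^ (p - 1)) ^ 2) z := by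
  have h2 : z ^ (2 * p - 1 - 1) = (z ^ (p - 1)) ^ 2 := by
    rw [show 2 * p - 1 - 1 = (p - 1) + (p - 1) by ring, Real.rpow_add hz]; ring
  have := (((hasDerivAt_id z).const_mul (-ω)).add
    (Real.hasDerivAt_rpow_const (x := z) (p := p) (Or.inl hz.ne'))).sub
    (Real.hasDerivAt_rpow_const (x := z) (p := 2 * p - 1) (Or.inl hz.ne'))
  rw [h2] at this
  refine (this.congr_of_eventuallyEq (Eventually.of_forall fun y => ?_)).congr_deriv ?_
  · simp [fN]
  · ring

lemma FN_deriv {p : ℝ} (ω : ℝ) (hp : 1 < p) {z : ℝ} (hz : 0 < z) :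
    HasDerivAt (FN p ω) (fN p ω z) z := by
  have := ((((hasDerivAt_id z).pow 2).const_mul (-ω / 2)).add
    ((Real.hasDerivAt_rpow_const (x := z) (p := p + 1) (Or.inl hz.ne')).div_const (p + 1))).sub
    ((Real.hasDerivAt_rpow_const (x := z) (p := 2 * p) (Or.inl hz.ne')).div_const (2 * p))
  have hp1 : p + 1 ≠ 0 := by linarith
  have hp2 : p ≠ 0 := by linarith
  refine (this.congr_of_eventuallyEq (Eventually.of_forall fun y => ?_)).congr_deriv ?_
  · simp [FN]; ring
  · simp only [fN, add_sub_cancel_right, id]; field_simp; norm_num; ring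

lemma exists_tb {p ω : ℝ} (hp : 1 < p)
    (hω₁ : p * (7 * p - 5) / (4 * (p + 1) * (2 * p - 1) ^ 2) ≤ ω)
    (hω₂ : ω < p / (p + 1) ^ 2) :
    ∃ t, p / (2 * (2 * p - 1)) ≤ t ∧ t < p / (p + 1) ∧
      -ω / 2 + t / (p + 1) - t ^ 2 / (2 * p) = 0 := by
  have hp0 : 0 < p := by linarith
  have hp1 : 0 < p + 1 := by linarith
  have hp2 : 0 < 2 * p - 1 := by linarith
  have hp2' : 2 * p - 1 ≠ 0 := hp2.ne'
  have hp1' : p + 1 ≠ 0 := hp1.ne'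
  set D := p ^ 2 / (p + 1) ^ 2 - p * ω with hD
  have hDpos : 0 < D := by
    have h1 : p * ω < p * (p / (p + 1) ^ 2) := mul_lt_mul_of_pos_left hω₂ hp0
    have h2 : p * (p / (p + 1) ^ 2) = p ^ 2 / (p + 1) ^ 2 := by ring
    linarith
  have hDle : D ≤ (3 * p * (p - 1) / (2 * (p + 1) * (2 * p - 1))) ^ 2 := by
    have h1 := mul_le_mul_of_nonneg_left hω₁ hp0.le
    have h2 : p ^ 2 / (p + 1) ^ 2 - p * (p * (7 * p - 5) / (4 * (p + 1) * (2 * p - 1) ^ 2)) =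
      (3 * p * (p - 1) / (2 * (p + 1) * (2 * p - 1))) ^ 2 := by
      generalize hm : 2 * p - 1 = m at *
      field_simp; rw [← hm]; ring
    linarith
  have hs : √D ≤ 3 * p * (p - 1) / (2 * (p + 1) * (2 * p - 1)) := by
    apply Real.sqrt_le_iff.2 ⟨_, hDle⟩
    have : 0 < p - 1 := by linarith
    positivity
  refine ⟨p / (p + 1) - √D, ?_, ?_, ?_⟩
  · have : p / (p + 1) - 3 * p * (p - 1) / (2 * (p + 1) * (2 * p - 1)) = p / (2 * (2 * p - 1)) := by
      generalize hm : 2 * p - 1 = m at *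
      field_simp; rw [← hm]; ring
    linarith
  · have := Real.sqrt_pos.2 hDpos
    linarith
  · have h3 := Real.sq_sqrt hDpos.le
    have : (p / (p + 1) - √D) ^ 2 = p ^ 2 / (p + 1) ^ 2 - 2 * (p / (p + 1)) * √D + D := by
      rw [sub_sq, h3, div_pow]
    rw [this, hD]; field_simp; ring

lemma fN_nl {p ω : ℝ} (hp : 1 < p)
    (hω₁ : p * (7 * p - 5) / (4 * (p + 1) * (2 * p - 1) ^ 2) ≤ ω)
    (hω₂ : ω < p / (p + 1) ^ 2) : ∃ β, Nl (fN p ω) (FN p ω) β := by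
  have hp0 : 0 < p := by linarith
  have hp1 : 0 < p + 1 := by linarith
  have hp2 : 0 < 2 * p - 1 := by linarith
  have hq : 0 < p - 1 := by linarith
  have hω : 0 < ω := by
    refine lt_of_lt_of_le ?_ hω₁
    have : 0 < 7 * p - 5 := by linarith
    positivity
  obtain ⟨T, hT1, hT2, hT0⟩ := exists_tb hp hω₁ hω₂
  have hTpos : 0 < T := lt_of_lt_of_le (by positivity) hT1
  have hT2' : T / p < 1 / (p + 1) := by
    rw [div_lt_div_iff₀ hp0 hp1]; rw [lt_div_iff₀ hp1] at hT2; linarith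
  have hfc : ContinuousOn (fN p ω) (Ioi 0) := fun z hz =>
    (fN_deriv p ω hz).continuousAt.continuousWithinAt
  -- factorisation of the potential
  have hqf : ∀ t, -ω / 2 + t / (p + 1) - t ^ 2 / (2 * p) =
      (t - T) * (1 / (p + 1) - T / p + (T - t) / (2 * p)) := by
    intro t
    have e : -ω / 2 = T ^ 2 / (2 * p) - T / (p + 1) := by linarith
    rw [e]; field_simp; ring
  have htpos : ∀ {z : ℝ}, 0 < z → 0 < z ^ (p - 1) := fun hz => Real.rpow_pos_of_pos hz _
  have htm : ∀ {x y : ℝ}, 0 < x → x < y → x ^ (p - 1) < y ^ (p - 1) := fun hx hxy =>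
    Real.rpow_lt_rpow hx.le hxy hq
  have htm' : ∀ {x y : ℝ}, 0 < x → x ≤ y → x ^ (p - 1) ≤ y ^ (p - 1) := fun hx hxy =>
    Real.rpow_le_rpow hx.le hxy hq.le
  set β := T ^ (1 / (p - 1)) with hβ
  have hβ0 : 0 < β := Real.rpow_pos_of_pos hTpos _
  have hβT : β ^ (p - 1) = T := by
    rw [hβ, ← Real.rpow_mul hTpos.le, one_div, inv_mul_cancel₀ hq.ne', Real.rpow_one]
  -- positivity of g at potential-nonnegative points below the peak
  have hg : ∀ t, 0 < t → t < p / (p + 1) → 0 ≤ -ω / 2 + t / (p + 1) - t ^ 2 / (2 * p) →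
      0 < -ω + t - t ^ 2 := by
    intro t ht ht2 h
    have h2 : 0 < 1 / (p + 1) - t / p := by
      rw [sub_pos, div_lt_div_iff₀ hp0 hp1]; rw [lt_div_iff₀ hp1] at ht2; linarith
    have h3 : -ω + t - t ^ 2 = 2 * (-ω / 2 + t / (p + 1) - t ^ 2 / (2 * p))
        + t * (p - 1) * (1 / (p + 1) - t / p) := by
      field_simp; ring
    have h4 : 0 < t * (p - 1) * (1 / (p + 1) - t / p) := by positivity
    linarith
  have hfβ : 0 < fN p ω β := by
    rw [fN_eq p ω hβ0, hβT]
    exact mul_pos hβ0 (hg T hTpos hT2 hT0.ge)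
  refine ⟨β, ⟨fun z hz => FN_deriv ω hp hz, hfc, ?_, ?_, ?_, ?_, ?_, ?_⟩⟩
  · -- local Lipschitz
    intro a b ha
    have hcd : ContinuousOn (fun z : ℝ => -ω + p * z ^ (p - 1) - (2 * p - 1) * (z ^ (p - 1)) ^ 2)
        (Icc a b) := by
      have : ContinuousOn (fun z : ℝ => z ^ (p - 1)) (Icc a b) :=
        continuousOn_id.rpow_const (fun z _ => Or.inr hq.le)
      fun_prop
    obtain ⟨L, hL⟩ := isCompact_Icc.exists_bound_of_continuousOn hcd
    refine ⟨max L 0, le_max_right _ _, fun x hx y hy => ?_⟩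
    have := (convex_Icc a b).norm_image_sub_le_of_norm_hasDerivWithin_le
      (fun z hz => (fN_deriv p ω (ha.trans_le hz.1)).hasDerivWithinAt)
      (fun z hz => (hL z hz).trans (le_max_left L 0)) hy hx
    simpa [Real.norm_eq_abs] using this
  · intro z hz hzβ
    rw [FN_eq p ω hz, hqf]
    have h1 : z ^ (p - 1) ≤ T := hβT ▸ htm' hz hzβ
    refine mul_nonpos_of_nonneg_of_nonpos (by positivity)
      (mul_nonpos_of_nonpos_of_nonneg (by linarith) ?_)
    have : 0 ≤ (T - z ^ (p - 1)) / (2 * p) := div_nonneg (by linarith) (by linarith)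
    linarith
  · have hc : ContinuousAt (FN p ω) 0 := by
      unfold FN
      have h1 : ContinuousAt (fun z : ℝ => z ^ (p + 1)) 0 :=
        Real.continuousAt_rpow_const _ _ (Or.inr hp1.le)
      have h2 : ContinuousAt (fun z : ℝ => z ^ (2 * p)) 0 :=
        Real.continuousAt_rpow_const _ _ (Or.inr (by linarith))
      fun_prop
    have h0 : FN p ω 0 = 0 := by
      simp [FN, Real.zero_rpow hp1.ne', Real.zero_rpow (show 2 * p ≠ 0 by linarith)]
    have := hc.tendsto
    rw [h0] at this
    exact this.mono_left nhdsWithin_le_nhds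
  · -- concavity
    have hcon : ConcaveOn ℝ (Ici β) (fN p ω) := by
      apply AntitoneOn.concaveOn_of_deriv (convex_Ici β)
      · exact hfc.mono fun z hz => hβ0.trans_le hz
      · intro z hz
        rw [interior_Ici] at hz
        exact (fN_deriv p ω (hβ0.trans hz)).differentiableAt.differentiableWithinAt
      · rw [interior_Ici]
        intro x hx y hy hxy
        rw [(fN_deriv p ω (hβ0.trans hx)).deriv, (fN_deriv p ω (hβ0.trans hy)).deriv]
        have h1 : T ≤ x ^ (p - 1) := hβT ▸ htm' hβ0 (le_of_lt hx)
        have h2 := htm' (hβ0.trans hx) hxy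
        rw [div_le_iff₀ (by positivity)] at hT1
        have h3 : p ≤ (2 * p - 1) * (x ^ (p - 1) + y ^ (p - 1)) := by nlinarith
        nlinarith
    intro x y hx hxy
    rcases eq_or_lt_of_le hx with rfl | hx'
    · rw [sub_self, mul_zero]; exact mul_pos hfβ (by linarith)
    · have hyb : 0 < y - β := by linarith
      have hcon2 := hcon.2
      have h := @hcon2 β (self_mem_Ici (a := β)) y (show y ∈ Ici β from (hx'.trans hxy).le)
        ((y - x) / (y - β)) ((x - β) / (y - β))
        (div_nonneg (by linarith) hyb.le) (div_nonneg (by linarith) hyb.le)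
        (by field_simp; ring)
      have e : ((y - x) / (y - β)) • β + ((x - β) / (y - β)) • y = x := by
        simp only [smul_eq_mul]; field_simp; ring
      rw [e] at h
      simp only [smul_eq_mul] at h
      have h2 := mul_le_mul_of_nonneg_right h hyb.le
      have e2 : ((y - x) / (y - β) * fN p ω β + (x - β) / (y - β) * fN p ω y) * (y - β)
        = (y - x) * fN p ω β + fN p ω y * (x - β) := by field_simp
      have h3 : 0 < (y - x) * fN p ω β := mul_pos (by linarith) hfβ
      linarith
  · intro x y hx hxy hfy hFy
    have hy := hx.trans hxy
    rw [fN_eq p ω hy] at hfy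
    have hgy := nonneg_of_mul_nonneg_right hfy hy
    rcases lt_or_ge (-ω / 2 + x ^ (p - 1) / (p + 1) - (x ^ (p - 1)) ^ 2 / (2 * p)) 0 with h | h
    · refine lt_of_lt_of_le ?_ hFy
      rw [FN_eq p ω hx]
      exact mul_neg_of_pos_of_neg (by positivity) h
    · have hgx : 0 < -ω + x ^ (p - 1) - (x ^ (p - 1)) ^ 2 := by
        rcases lt_or_ge (x ^ (p - 1)) (p / (p + 1)) with h1 | h1
        · exact hg _ (htpos hx) h1 h
        · have h2 : 1 / 2 < p / (p + 1) := by
            rw [div_lt_div_iff₀ (by norm_num) hp1]; linarith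
          have h3 := htm hx hxy
          nlinarith
      refine smono_of (convex_Icc x y) (fun z hz => FN_deriv ω hp (hx.trans_le hz.1)) ?_
        (left_mem_Icc.2 hxy.le) (right_mem_Icc.2 hxy.le) hxy
      intro z hz
      rw [interior_Icc] at hz
      have hz0 := hx.trans hz.1
      rw [fN_eq p ω hz0]
      have h1 := htm hx hz.1
      have h2 := htm hz0 hz.2
      refine mul_pos hz0 ?_
      by_contra hcon
      push Not at hcon
      have h5 : 0 < (z ^ (p - 1) - x ^ (p - 1)) * (1 - z ^ (p - 1) - x ^ (p - 1)) → False := by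
        intro h6; nlinarith
      have h6 : 0 ≤ (y ^ (p - 1) - z ^ (p - 1)) * (1 - z ^ (p - 1) - y ^ (p - 1)) := by nlinarith
      have h7 : 0 ≤ 1 - z ^ (p - 1) - y ^ (p - 1) :=
        nonneg_of_mul_nonneg_right h6 (by linarith)
      exact h5 (mul_pos (by linarith) (by linarith))
  · -- behaviour near zero
    set τ := ω / (2 * p) with hτ
    have hτ0 : 0 < τ := by positivity
    have hδT : (τ ^ (1 / (p - 1))) ^ (p - 1) = τ := by
      rw [← Real.rpow_mul hτ0.le, one_div, inv_mul_cancel₀ hq.ne', Real.rpow_one]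
    have hτp : p * τ = ω / 2 := by rw [hτ]; field_simp
    have key : ∀ z ∈ Ioo 0 (τ ^ (1 / (p - 1))), 0 < z ^ (p - 1) ∧ p * z ^ (p - 1) < ω / 2 := by
      intro z hz
      refine ⟨htpos hz.1, ?_⟩
      rw [← hτp]
      exact mul_lt_mul_of_pos_left (hδT ▸ htm hz.1 hz.2) hp0
    refine ⟨τ ^ (1 / (p - 1)), √(ω / 2), Real.rpow_pos_of_pos hτ0 _,
      Real.sqrt_pos.2 (by positivity), ?_, ?_⟩
    · refine santi_of (convex_Ioo _ _) (fun z hz => fN_deriv p ω hz.1) ?_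
      intro z hz
      rw [interior_Ioo] at hz
      obtain ⟨h1, h2⟩ := key z hz
      have : 0 < (2 * p - 1) * (z ^ (p - 1)) ^ 2 := by positivity
      linarith
    · intro z hz
      obtain ⟨h1, h2⟩ := key z hz
      have hz0 := hz.1
      constructor
      · rw [fN_eq p ω hz0]
        refine mul_neg_of_pos_of_neg hz0 ?_
        nlinarith
      · rw [FN_eq p ω hz0, mul_pow, Real.sq_sqrt (by positivity)]
        have h3 : z ^ (p - 1) / (p + 1) ≤ ω / 4 := by
          rw [div_le_iff₀ hp1]; nlinarith
        have h4 : 0 ≤ (z ^ (p - 1)) ^ 2 / (2 * p) := by positivity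
        have h5 : z ^ 2 * (-ω / 2 + z ^ (p - 1) / (p + 1) - (z ^ (p - 1)) ^ 2 / (2 * p)) ≤
          z ^ 2 * (-ω / 4) := mul_le_mul_of_nonneg_left (by linarith) (by positivity)
        linarith

lemma IsPositiveSolution.toSol {n : ℕ} (hn : 0 < n) {p ω : ℝ} {u : ℝ → ℝ}
    (h : IsPositiveSolution n p ω u) : Sol (n - 1) (fN p ω) u := by
  obtain ⟨h1, h2, h3, h4, h5, h6⟩ := h
  refine ⟨h1, fun r hr => (h2 r hr).1.hasDerivAt, fun r hr => ?_, h4, h5, h6⟩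
  refine (h2 r hr).2.hasDerivAt.congr_deriv ?_
  have := h3 r hr
  rw [Nat.cast_pred hn, fN]
  linarith


/-- For `p > 1` and `a_p ≤ ω < ω_p`, problem (b) has at most one positive solution. -/
theorem uniqueness_of_positive_solution (n : ℕ) (hn : 0 < n) (p ω : ℝ) (hp : 1 < p)
    (hω₁ : p * (7 * p - 5) / (4 * (p + 1) * (2 * p - 1) ^ 2) ≤ ω)
    (hω₂ : ω < p / (p + 1) ^ 2)
    (u₁ u₂ : ℝ → ℝ)
    (h₁ : IsPositiveSolution n p ω u₁) (h₂ : IsPositiveSolution n p ω u₂) :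
    Set.EqOn u₁ u₂ (Set.Ici 0) := by
  obtain ⟨β, hN⟩ := fN_nl hp hω₁ hω₂
  exact Sol.unique (h₁.toSol hn) (h₂.toSol hn) hN
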